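/- Let X be a finite set and let A be an abelian subgroup of Sym(X). Then A is the automorphism group of some k-coloured graph on X for some k ≥ 1 if and only if A is the automorphism group of some 4-coloured graph on X (that is, A ∈ GR if and only if A ∈ GR(4)). -/

import Mathlib

/-- The orbit of a point `x` under a set `G` of permutations of `X`. -/
def orbitOf {X : Type*} (G : Set (Equiv.Perm X)) (x : X) : Set X :=
  {y | ∃ a ∈ G, a x = y}

/-- A permutation `σ` is 2-orbit-compatible with `G` if for every pair of orbits
`O` and `Q` of `G` there is an element of `G` agreeing with `σ` on `O ∪ Q`. -/
def TwoOrbitCompatible {X : Type*} (G : Set (Equiv.Perm X)) (σ : Equiv.Perm X) : Prop :=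
  ∀ x y : X, ∃ a ∈ G, ∀ z ∈ orbitOf G x ∪ orbitOf G y, σ z = a z

/-- A subgroup `A ≤ Sym(X)` is 2-orbit-closed if every permutation that is
2-orbit-compatible with `A` belongs to `A`. -/
def TwoOrbitClosed {X : Type*} (A : Subgroup (Equiv.Perm X)) : Prop :=
  ∀ σ : Equiv.Perm X, TwoOrbitCompatible (A : Set (Equiv.Perm X)) σ → σ ∈ A

/-- `A` is precisely the automorphism group of the `k`-coloured graph `γ` on `X`. -/
def IsColGraphAutGroup {X : Type*} {k : ℕ} (γ : Sym2 X → Fin k)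
    (A : Subgroup (Equiv.Perm X)) : Prop :=
  ∀ σ : Equiv.Perm X, σ ∈ A ↔ ∀ x y : X, x ≠ y → γ s(σ x, σ y) = γ s(x, y)

/-- `A ∈ GR`: `A` is the automorphism group of some coloured graph on `X`. -/
def InGR {X : Type*} (A : Subgroup (Equiv.Perm X)) : Prop :=
  ∃ k : ℕ, 1 ≤ k ∧ ∃ γ : Sym2 X → Fin k, IsColGraphAutGroup γ A

/-- `A ∈ GR(4)`: `A` is the automorphism group of some 4-coloured graph on `X`. -/
def InGR4 {X : Type*} (A : Subgroup (Equiv.Perm X)) : Prop :=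
  ∃ γ : Sym2 X → Fin 4, IsColGraphAutGroup γ A

namespace GRab

/-- `x = a` or `x = -a`. -/
def PM {B : Type*} [AddCommGroup B] (a x : B) : Prop := x = a ∨ x = -a

theorem PM.neg {B : Type*} [AddCommGroup B] {a x : B} (h : PM a x) : PM a (-x) := by
  rcases h with h | h
  · right; rw [h]
  · left; rw [h, neg_neg]

theorem PM_neg_iff {B : Type*} [AddCommGroup B] {a x : B} : PM a (-x) ↔ PM a x :=
  ⟨fun h => by simpa using h.neg, PM.neg⟩

section Coord
variable {r : ℕ} {n : Fin r → ℕ}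

/-- standard generators -/
def ee (n : Fin r → ℕ) (i : Fin r) : (i : Fin r) → ZMod (n i) := Pi.single i 1

theorem ee_same (i : Fin r) : ee n i i = 1 := by simp [ee]

theorem ee_ne {i k : Fin r} (h : k ≠ i) : ee n i k = 0 := by simp [ee, Pi.single_eq_of_ne h]

theorem PM_supp [∀ i, Fact (1 < n i)] {i : Fin r} {u : (i : Fin r) → ZMod (n i)}
    (h : PM (ee n i) u) (k : Fin r) : u k ≠ 0 ↔ k = i := by
  by_cases hk : k = i
  · subst hk
    rcases h with rfl | rfl <;> simp [ee_same]
  · rcases h with rfl | rfl <;> simp [ee_ne hk, hk]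

theorem PM_supp2 [∀ i, Fact (1 < n i)] {i j : Fin r} (hij : i ≠ j)
    {u : (i : Fin r) → ZMod (n i)}
    (h : PM (ee n i + ee n j) u) (k : Fin r) : u k ≠ 0 ↔ k = i ∨ k = j := by
  by_cases hk : k = i
  · subst hk
    rcases h with rfl | rfl <;> simp [ee_same, ee_ne hij]
  · by_cases hk' : k = j
    · subst hk'
      rcases h with rfl | rfl <;> simp [ee_same, ee_ne hk]
    · rcases h with rfl | rfl <;> simp [ee_ne hk, ee_ne hk', hk, hk']

theorem one_ne_neg_one' {m : ℕ} (h : 2 < m) : (1 : ZMod m) ≠ -1 := by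
  haveI : Fact (2 < m) := ⟨h⟩
  exact (ZMod.neg_one_ne_one).symm

/-- The final step of the rigidity argument. -/
theorem endgame (hn : ∀ i, 1 < n i) (hmono : Monotone n)
    (φ : ((i : Fin r) → ZMod (n i)) → ((i : Fin r) → ZMod (n i))) (hinj : Function.Injective φ)
    (H1 : ∀ x k, PM (ee n k) (φ (x + ee n k) - φ x))
    (H2 : ∀ i j : Fin r, (j : ℕ) = i + 1 → 2 < n i →
      ¬ PM (ee n i - ee n j) (φ (0 + ee n i + ee n j) - φ 0)) :
    (∃ t, ∀ x, φ x = x + t) ∨ (∃ t, ∀ x, φ x = -x + t) := by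
  haveI : ∀ i, Fact (1 < n i) := fun i => ⟨hn i⟩
  haveI : ∀ i, NeZero (n i) := fun i => ⟨by have := hn i; omega⟩
  -- constancy of signs
  have hconst : ∀ k i x, φ (x + ee n i + ee n k) - φ (x + ee n i) = φ (x + ee n k) - φ x := by
    intro k i x
    by_cases hik : i = k
    · subst hik
      have h1 := H1 x i
      have h2 := H1 (x + ee n i) i
      have h3 : φ (x + ee n i + ee n i) = φ x → ee n i = - ee n i := by
        intro h
        have := hinj h
        rw [add_assoc] at this
        have h4 : ee n i + ee n i = 0 := by simpa using this
        exact eq_neg_of_add_eq_zero_left h4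
      rcases h1 with h1 | h1 <;> rcases h2 with h2 | h2
      · rw [h1, h2]
      · rw [h1, h2]
        refine (h3 ?_).symm
        have : φ (x + ee n i + ee n i) = (φ (x + ee n i + ee n i) - φ (x + ee n i)) + (φ (x + ee n i) - φ x) + φ x := by abel
        rw [this, h1, h2]; abel
      · rw [h1, h2]
        refine (h3 ?_)
        have : φ (x + ee n i + ee n i) = (φ (x + ee n i + ee n i) - φ (x + ee n i)) + (φ (x + ee n i) - φ x) + φ x := by abel
        rw [this, h1, h2]; abel
      · rw [h1, h2]
    · have a1 := H1 x i
      have a2 := H1 x k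
      have a3 := H1 (x + ee n i) k
      have a4 := H1 (x + ee n k) i
      have e1 : (φ (x + ee n i + ee n k) - φ (x + ee n i)) + (φ (x + ee n i) - φ x)
          = (φ (x + ee n k + ee n i) - φ (x + ee n k)) + (φ (x + ee n k) - φ x) := by
        rw [add_right_comm]; abel
      generalize φ (x + ee n i + ee n k) - φ (x + ee n i) = p at *
      generalize φ (x + ee n i) - φ x = q at *
      generalize φ (x + ee n k + ee n i) - φ (x + ee n k) = s at *
      generalize φ (x + ee n k) - φ x = t at *
      funext l
      have e2 := congrFun e1 l
      simp only [Pi.add_apply] at e2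
      by_cases hl : l = i
      · have b1 := (PM_supp a3 l).not
        have b2 := (PM_supp a2 l).not
        have : l ≠ k := fun h => hik (hl.symm.trans h)
        simp only [this, not_false_iff, iff_true, not_not] at b1 b2
        rw [b1, b2]
      · have b1 := (PM_supp a1 l).not
        have b2 := (PM_supp a4 l).not
        simp only [hl, not_false_iff, iff_true, not_not] at b1 b2
        rw [b1, b2] at e2
        simpa using e2
  set f : Fin r → ((i : Fin r) → ZMod (n i)) := fun k => φ (0 + ee n k) - φ 0 with hf
  -- sign vector
  have hs : ∀ k, ∃ s : ℤ, (s = 1 ∨ s = -1) ∧ f k = s • ee n k := by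
    intro k
    rcases H1 0 k with h | h
    · exact ⟨1, Or.inl rfl, by simpa [hf] using h⟩
    · exact ⟨-1, Or.inr rfl, by simpa [hf] using h⟩
  choose s hs1 hs2 using hs
  let g : ((i : Fin r) → ZMod (n i)) →+ ((i : Fin r) → ZMod (n i)) :=
    { toFun := fun x k => (s k) • x k
      map_zero' := by ext; simp
      map_add' := by intro x y; ext; simp }
  have hge : ∀ k, g (ee n k) = f k := by
    intro k; rw [hs2]
    funext l
    by_cases hl : l = k
    · subst hl; simp [g]
    · simp [g, ee_ne hl]
  let T : AddSubgroup ((i : Fin r) → ZMod (n i)) :=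
    { carrier := {y | ∀ x, φ (x + y) - φ x = g y}
      zero_mem' := by intro x; simp
      add_mem' := by
        intro a b ha hb x
        have h1 := ha x
        have h2 := hb (x + a)
        rw [map_add, ← h1, ← h2, add_assoc]; abel
      neg_mem' := by
        intro a ha x
        have h1 := ha (x + -a)
        rw [neg_add_cancel_right] at h1
        rw [map_neg, ← h1]; abel }
  have hall : ∀ k x y, φ (x + ee n k) - φ x = φ (y + ee n k) - φ y → True := fun _ _ _ _ => trivial
  -- closure under the translation
  have hgen : ∀ (U : AddSubgroup ((i : Fin r) → ZMod (n i))), (∀ k, ee n k ∈ U) → ∀ x, x ∈ U := by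
    intro U hU x
    rw [← Finset.univ_sum_single x]
    refine AddSubgroup.sum_mem _ fun k _ => ?_
    have : Pi.single k (x k) = (x k).val • ee n k := by
      funext l
      by_cases hl : l = k
      · subst hl; simp [ee]
      · simp [ee, Pi.single_eq_of_ne hl]
    rw [this]
    exact AddSubgroup.nsmul_mem _ (hU k) _
  have hT : ∀ k, ee n k ∈ T := by
    intro k
    let U : AddSubgroup ((i : Fin r) → ZMod (n i)) :=
      { carrier := {y | ∀ x, φ (x + y + ee n k) - φ (x + y) = φ (x + ee n k) - φ x}
        zero_mem' := by intro x; simp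
        add_mem' := by
          intro a b ha hb x
          have h1 := ha x
          have h2 := hb (x + a)
          rw [← h1, ← h2, add_assoc x a b]
        neg_mem' := by
          intro a ha x
          have h1 := ha (x + -a)
          rw [neg_add_cancel_right] at h1
          exact h1.symm }
    have hU := hgen U (fun i x => hconst k i x)
    intro x
    have := hU x 0
    rw [zero_add] at this
    rw [this, hge, hf]
  have hφ : ∀ x, φ x = g x + φ 0 := by
    intro x
    have := hgen T hT x 0
    rw [zero_add] at this
    rw [← this]; abel
  -- consistency
  have hstep : ∀ i j : Fin r, (j : ℕ) = i + 1 → 2 < n i → s i = s j := by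
    intro i j hij hi
    have h := H2 i j hij hi
    have hx : φ (0 + ee n i + ee n j) - φ 0 = s i • ee n i + s j • ee n j := by
      rw [hφ (0 + ee n i + ee n j), zero_add, map_add, hge, hge, hs2, hs2]; abel
    rw [hx] at h
    rcases hs1 i with a | a <;> rcases hs1 j with b | b
    · rw [a, b]
    · exact absurd (Or.inl (by rw [a, b]; simp [sub_eq_add_neg])) h
    · exact absurd (Or.inr (by rw [a, b]; simp [sub_eq_add_neg, add_comm])) h
    · rw [a, b]
  have hcons : ∀ d : ℕ, ∀ i j : Fin r, (j : ℕ) = i + d → 2 < n i → s i = s j := by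
    intro d
    induction d with
    | zero => intro i j h _; congr 1; exact Fin.ext h.symm
    | succ d ih =>
      intro i j h hi
      have hlt : (i : ℕ) + d < r := by have := j.2; omega
      rw [ih i ⟨i + d, hlt⟩ rfl hi]
      apply hstep _ _ (by simp; omega)
      exact lt_of_lt_of_le hi (hmono (by simp [Fin.le_def]))
  have hcons2 : ∀ i j : Fin r, 2 < n i → 2 < n j → s i = s j := by
    intro i j hi hj
    rcases le_total (i : ℕ) j with h | h
    · exact hcons (j - i) i j (by omega) hi
    · exact (hcons (i - j) j i (by omega) hj).symm
  have htwo : ∀ k, ¬ 2 < n k → ∀ y : ZMod (n k), -y = y := by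
    intro k hk y
    have : n k = 2 := by have := hn k; omega
    generalize n k = m at *
    subst this
    revert y; decide
  have hfin : ∃ ε : ℤ, (ε = 1 ∨ ε = -1) ∧ ∀ k (y : ZMod (n k)), s k • y = ε • y := by
    by_cases hex : ∃ i, 2 < n i
    · obtain ⟨i, hi⟩ := hex
      refine ⟨s i, hs1 i, fun k y => ?_⟩
      by_cases hk : 2 < n k
      · rw [hcons2 k i hk hi]
      · have := htwo k hk y
        rcases hs1 k with a | a <;> rcases hs1 i with b | b <;> simp [a, b, this]
    · push Not at hex
      refine ⟨1, Or.inl rfl, fun k y => ?_⟩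
      have := htwo k (not_lt.mpr (hex k)) y
      rcases hs1 k with a | a <;> simp [a, this]
  obtain ⟨ε, hε, hfin⟩ := hfin
  have hg : ∀ x, g x = ε • x := by
    intro x; funext k; exact hfin k (x k)
  rcases hε with h | h
  · left; refine ⟨φ 0, fun x => ?_⟩; rw [hφ x, hg, h]; simp
  · right; refine ⟨φ 0, fun x => ?_⟩; rw [hφ x, hg, h]; simp

end Coord
end GRab

namespace GRab

/-- Internal colourings of a regular orbit. -/
structure IntCol (B : Type*) [AddCommGroup B] (E : B → Prop) (c : B → Fin 4) : Prop where
  zero : c 0 = 0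
  even : ∀ x, c (-x) = c x
  gen : AddSubgroup.closure {x | c x = 3} = ⊤
  cnt : Nontrivial B → {x | c x = 2}.ncard < {x | c x = 3}.ncard
  rigid : ∀ φ : B → B, Function.Bijective φ → (∀ x y, c (φ x - φ y) = c (x - y)) →
    (∀ x y, E (x - y) → E (φ x - φ y)) →
    (∃ t, ∀ x, φ x = x + t) ∨ (∃ t, ∀ x, φ x = -x + t)

section Coord
variable {r : ℕ} {n : Fin r → ℕ}

theorem ee_gen (hn : ∀ i, 1 < n i) (U : AddSubgroup ((i : Fin r) → ZMod (n i)))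
    (hU : ∀ k, ee n k ∈ U) (x) : x ∈ U := by
  have : ∀ i, NeZero (n i) := fun i => ⟨by have := hn i; omega⟩
  rw [← Finset.univ_sum_single x]
  refine AddSubgroup.sum_mem _ fun k _ => ?_
  have : Pi.single k (x k) = (x k).val • ee n k := by
    funext l
    by_cases hl : l = k
    · subst hl; simp [ee]
    · simp [ee, Pi.single_eq_of_ne hl]
  rw [this]
  exact AddSubgroup.nsmul_mem _ (hU k) _

theorem intcol_core (hn : ∀ i, 1 < n i) (hmono : Monotone n)
    (E : ((i : Fin r) → ZMod (n i)) → Prop) (c : ((i : Fin r) → ZMod (n i)) → Fin 4)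
    (hzero : c 0 = 0) (heven : ∀ x, c (-x) = c x)
    (hS : ∀ x, c x = 3 ↔ ∃ i, PM (ee n i) x)
    (hcnt : Nontrivial ((i : Fin r) → ZMod (n i)) → {x | c x = 2}.ncard < {x | c x = 3}.ncard)
    (hsum : ∀ i j : Fin r, (j : ℕ) = i + 1 → 2 < n i → c (ee n i - ee n j) ≠ c (ee n i + ee n j))
    (hrec : ∀ ψ : ((i : Fin r) → ZMod (n i)) → ((i : Fin r) → ZMod (n i)), Function.Bijective ψ →
      ψ 0 = 0 → (∀ x y, c (ψ x - ψ y) = c (x - y)) →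
      (∀ x y, E (x - y) → E (ψ x - ψ y)) → ∀ k u, PM (ee n k) u → PM (ee n k) (ψ u)) :
    IntCol _ E c where
  zero := hzero
  even := heven
  cnt := hcnt
  gen := by
    rw [eq_top_iff]
    intro x _
    refine ee_gen hn _ (fun k => AddSubgroup.subset_closure ?_) x
    exact (hS _).2 ⟨k, Or.inl rfl⟩
  rigid := by
    intro φ hφ hc hE
    have hψ : ∀ x, (∀ k u, PM (ee n k) u → PM (ee n k) (φ (x + u) - φ x)) := by
      intro x
      refine hrec (fun u => φ (x + u) - φ x) ?_ (by simp) ?_ ?_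
      · constructor
        · intro a b h
          simpa using hφ.1 (sub_left_injective h)
        · intro b
          obtain ⟨a, ha⟩ := hφ.2 (b + φ x)
          exact ⟨a - x, by simp [ha]⟩
      · intro a b
        have := hc (x + a) (x + b)
        simpa using this
      · intro a b hab
        have := hE (x + a) (x + b) (by simpa using hab)
        simpa using this
    refine endgame hn hmono φ hφ.1 (fun x k => hψ x k _ (Or.inl rfl)) ?_
    intro i j hij hi hPM
    have h1 := hc (0 + ee n i + ee n j) 0
    rw [zero_add, sub_zero] at h1
    rw [zero_add] at hPM
    apply hsum i j hij hi
    rw [← h1]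
    rcases hPM with h | h
    · rw [h]
    · rw [h, heven]

open Classical in
theorem intcol_one (hn : ∀ i, 1 < n i) (hr : r ≤ 1) :
    ∃ c, IntCol ((i : Fin r) → ZMod (n i)) (fun _ => True) c := by
  have : ∀ i, Fact (1 < n i) := fun i => ⟨hn i⟩
  have : ∀ i, NeZero (n i) := fun i => ⟨by have := hn i; omega⟩
  have hsub : ∀ i j : Fin r, i = j := fun i j => Fin.ext (by have := i.2; have := j.2; omega)
  refine ⟨fun x => if ∃ i, PM (ee n i) x then 3 else 0, ?_⟩
  apply intcol_core hn
  · intro i j _; rw [hsub i j]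
  · rw [if_neg]
    rintro ⟨i, hi⟩
    exact (PM_supp hi i).2 rfl rfl
  · intro x; simp only [PM_neg_iff]
  · intro x; by_cases h : ∃ i, PM (ee n i) x <;> simp [h]
  · intro hnt
    have h2 : {x : (i : Fin r) → ZMod (n i) | (if ∃ i, PM (ee n i) x then (3 : Fin 4) else 0) = 2} = ∅ := by
      ext x; by_cases h : ∃ i, PM (ee n i) x <;> simp [h]
    rw [h2, Set.ncard_empty, Set.ncard_pos (Set.toFinite _)]
    rcases Nat.eq_zero_or_pos r with h | h
    · subst h; exact absurd hnt (not_nontrivial _)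
    · exact ⟨ee n ⟨0, h⟩, by
        have : ∃ i, PM (ee n i) (ee n ⟨0, h⟩) := ⟨_, Or.inl rfl⟩
        simp [this]⟩
  · intro i j h; rw [hsub i j] at h; omega
  · intro ψ _ h0 hc _ k u hu
    have := hc u 0
    rw [h0, sub_zero, sub_zero] at this
    have h3 : (if ∃ i, PM (ee n i) u then (3 : Fin 4) else 0) = 3 := if_pos ⟨k, hu⟩
    rw [h3] at this
    by_cases h : ∃ i, PM (ee n i) (ψ u)
    · obtain ⟨i, hi⟩ := h; rwa [hsub k i]
    · rw [if_neg h] at this; exact absurd this (by decide)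

theorem ncard_lt_three {T : Type*} [Finite T] {P Q : Set T} (a b x y z : T) (hP : P ⊆ {a, b})
    (hxy : x ≠ y) (hxz : x ≠ z) (hyz : y ≠ z) (hQ : {x, y, z} ⊆ Q) : P.ncard < Q.ncard := by
  have h1 : P.ncard ≤ 2 := (Set.ncard_le_ncard hP (Set.toFinite _)).trans (by
    have := Set.ncard_insert_le a {b}
    rwa [Set.ncard_singleton] at this)
  have h2 : ({x, y, z} : Set T).ncard = 3 := by
    rw [Set.ncard_eq_three]; exact ⟨x, y, z, hxy, hxz, hyz, rfl⟩
  have h3 := Set.ncard_le_ncard hQ (Set.toFinite _)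
  omega

theorem PM_sub_supp [∀ i, Fact (1 < n i)] {i j : Fin r} {u v : (i : Fin r) → ZMod (n i)}
    (hu : PM (ee n i) u) (hv : PM (ee n j) v) (hij : i ≠ j) (k : Fin r) :
    (u - v) k ≠ 0 ↔ k = i ∨ k = j := by
  have h1 := PM_supp hu k
  have h2 := PM_supp hv k
  simp only [Pi.sub_apply]
  by_cases hk : k = i
  · have : v k = 0 := by by_contra h; exact hij (hk.symm.trans (h2.1 h))
    rw [this, sub_zero, h1]; simp [hk]
  · have : u k = 0 := by by_contra h; exact hk (h1.1 h)
    rw [this, zero_sub, neg_ne_zero, h2]; simp [hk]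

theorem PM_sub_supp' [∀ i, Fact (1 < n i)] {i : Fin r} {u v : (i : Fin r) → ZMod (n i)}
    (hu : PM (ee n i) u) (hv : PM (ee n i) v) (k : Fin r) :
    (u - v) k ≠ 0 → k = i := by
  have h1 := PM_supp hu k
  have h2 := PM_supp hv k
  simp only [Pi.sub_apply]
  intro h
  by_contra hk
  have a : u k = 0 := by by_contra h; exact hk (h1.1 h)
  have b : v k = 0 := by by_contra h; exact hk (h2.1 h)
  simp [a, b] at h

open Classical in
theorem intcol_three (hn : ∀ i, 1 < n i) (hmono : Monotone n) (hr : 3 ≤ r) :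
    ∃ c, IntCol ((i : Fin r) → ZMod (n i)) (fun _ => True) c := by
  have : ∀ i, Fact (1 < n i) := fun i => ⟨hn i⟩
  have : ∀ i, NeZero (n i) := fun i => ⟨by have := hn i; omega⟩
  obtain ⟨i0, h0⟩ : ∃ i : Fin r, (i : ℕ) = 0 := ⟨⟨0, by omega⟩, rfl⟩
  obtain ⟨i1, h1⟩ : ∃ i : Fin r, (i : ℕ) = 1 := ⟨⟨1, by omega⟩, rfl⟩
  obtain ⟨i2, h2⟩ : ∃ i : Fin r, (i : ℕ) = 2 := ⟨⟨2, by omega⟩, rfl⟩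
  have d01 : i0 ≠ i1 := by intro h; rw [h] at h0; omega
  have d02 : i0 ≠ i2 := by intro h; rw [h] at h0; omega
  have d12 : i1 ≠ i2 := by intro h; rw [h] at h1; omega
  set S : ((i : Fin r) → ZMod (n i)) → Prop := fun x => ∃ i, PM (ee n i) x with hSdef
  set T2 : ((i : Fin r) → ZMod (n i)) → Prop := fun x => PM (ee n i0 + ee n i1) x with hT2def
  set T1 : ((i : Fin r) → ZMod (n i)) → Prop := fun x =>
    ∃ i j : Fin r, (j : ℕ) = i + 1 ∧ 1 ≤ (i : ℕ) ∧ PM (ee n i + ee n j) x with hT1def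
  have hne : ∀ i j : Fin r, (j : ℕ) = i + 1 → i ≠ j := by
    intro i j h h'; rw [h'] at h; omega
  have S2 : ∀ x, S x → ¬ T2 x := by
    rintro x ⟨i, hi⟩ h
    have a := PM_supp hi
    have b := PM_supp2 d01 h
    have := (a i0).1 ((b i0).2 (Or.inl rfl))
    have := (a i1).1 ((b i1).2 (Or.inr rfl))
    exact d01 (by simp [*])
  have S1 : ∀ x, S x → ¬ T1 x := by
    rintro x ⟨i, hi⟩ ⟨k, l, hkl, _, h⟩
    have a := PM_supp hi
    have b := PM_supp2 (hne k l hkl) h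
    have := (a k).1 ((b k).2 (Or.inl rfl))
    have := (a l).1 ((b l).2 (Or.inr rfl))
    exact hne k l hkl (by simp [*])
  have T21 : ∀ x, T2 x → ¬ T1 x := by
    rintro x h ⟨k, l, hkl, hk, h'⟩
    have a := PM_supp2 d01 h i0
    have b := PM_supp2 (hne k l hkl) h' i0
    rcases b.1 (a.2 (Or.inl rfl)) with h | h <;> have := congrArg Fin.val h <;> omega
  set c : ((i : Fin r) → ZMod (n i)) → Fin 4 := fun x =>
    if S x then 3 else if T2 x then 2 else if T1 x then 1 else 0 with hc
  have c3 : ∀ x, c x = 3 ↔ S x := by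
    intro x; simp only [hc]
    by_cases a : S x <;> by_cases b : T2 x <;> by_cases d : T1 x <;> simp [a, b, d]
  have c2 : ∀ x, c x = 2 ↔ T2 x := by
    intro x; simp only [hc]
    have := S2 x
    by_cases a : S x <;> by_cases b : T2 x <;> by_cases d : T1 x <;> simp [a, b, d] <;> tauto
  have c1 : ∀ x, c x = 1 ↔ T1 x := by
    intro x; simp only [hc]
    have p := S1 x
    have q := T21 x
    by_cases d : T1 x
    · rw [if_neg (fun h => p h d), if_neg (fun h => q h d)]; simp [d]
    · by_cases a : S x <;> by_cases b : T2 x <;> simp [a, b, d]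
  refine ⟨c, ?_⟩
  apply intcol_core hn hmono
  · simp only [hc]
    rw [if_neg, if_neg, if_neg]
    · rintro ⟨k, l, hkl, _, h⟩
      exact (PM_supp2 (hne k l hkl) h k).2 (Or.inl rfl) rfl
    · intro h; exact (PM_supp2 d01 h i0).2 (Or.inl rfl) rfl
    · rintro ⟨i, hi⟩; exact (PM_supp hi i).2 rfl rfl
  · intro x; simp only [hc, hSdef, hT1def, hT2def, PM_neg_iff]
  · exact c3
  · intro _
    have hd : ∀ i j : Fin r, i ≠ j → ee n i ≠ ee n j := by
      intro i j hij h
      have := (PM_supp (n := n) (i := i) (Or.inl rfl) i).2 rfl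
      rw [h, ee_ne hij] at this
      exact this rfl
    refine ncard_lt_three (ee n i0 + ee n i1) (-(ee n i0 + ee n i1)) (ee n i0) (ee n i1) (ee n i2)
      ?_ (hd _ _ d01) (hd _ _ d02) (hd _ _ d12) ?_
    · intro x hx
      exact (c2 x).1 hx
    · rintro x (rfl | rfl | rfl) <;> exact (c3 _).2 ⟨_, Or.inl rfl⟩
  · intro i j hij hi heq
    have hj : 2 < n j := lt_of_lt_of_le hi (hmono (by rw [Fin.le_def]; omega))
    have key : ∀ k l : Fin r, (l : ℕ) = k + 1 → ¬ PM (ee n k + ee n l) (ee n i - ee n j) := by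
      intro k l hkl h
      have a := PM_sub_supp (n := n) (i := i) (j := j) (Or.inl rfl) (Or.inl rfl) (hne i j hij)
      have b := PM_supp2 (hne k l hkl) h
      have e1 := (b i).1 ((a i).2 (Or.inl rfl))
      have e2 := (b j).1 ((a j).2 (Or.inr rfl))
      have hki : k = i := by
        rcases e1 with e | e
        · exact e.symm
        · rcases e2 with e' | e'
          · rw [e, e'] at hij; omega
          · exact absurd (e.trans e'.symm) (hne i j hij)
      have hlj : l = j := by
        rcases e2 with e | e
        · exact absurd (hki.symm.trans e.symm) (hne i j hij)
        · exact e.symm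
      subst hki; subst hlj
      rcases h with h | h
      · have := congrFun h l
        simp only [Pi.sub_apply, Pi.add_apply, ee_same, ee_ne (hne k l hij).symm] at this
        exact one_ne_neg_one' hj (by simpa using this.symm)
      · have := congrFun h k
        simp only [Pi.sub_apply, Pi.add_apply, Pi.neg_apply, ee_same, ee_ne (hne k l hij)] at this
        exact one_ne_neg_one' hi (by simpa using this)
    by_cases hi1 : 1 ≤ (i : ℕ)
    · have : T1 (ee n i + ee n j) := ⟨i, j, hij, hi1, Or.inl rfl⟩
      rw [(c1 _).2 this, c1] at heq
      obtain ⟨k, l, hkl, _, h⟩ := heq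
      exact key k l hkl h
    · have e0 : i = i0 := Fin.ext (by omega)
      have e1 : j = i1 := Fin.ext (by omega)
      have : T2 (ee n i + ee n j) := by rw [e0, e1]; exact Or.inl rfl
      rw [(c2 _).2 this, c2] at heq
      exact key i0 i1 (by omega) heq
  · intro ψ hψ hψ0 hcc _
    have hSS : ∀ u, S u ↔ S (ψ u) := by
      intro u
      have := hcc u 0
      rw [hψ0, sub_zero, sub_zero] at this
      rw [← c3, ← c3, this]
    -- claim 0
    have claim0 : ∀ u, PM (ee n i0) u → PM (ee n i0) (ψ u) := by
      intro u hu
      obtain ⟨i, hi⟩ := (hSS u).1 ⟨i0, hu⟩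
      by_contra hcon
      have hii : i ≠ i0 := fun h => hcon (h ▸ hi)
      have hipos : 1 ≤ (i : ℕ) := by
        by_contra h; exact hii (Fin.ext (by omega))
      -- produce a 1-neighbour
      have : ∃ v, S v ∧ T1 (ψ u - v) := by
        by_cases hi2 : 2 ≤ (i : ℕ)
        · obtain ⟨k, hk⟩ : ∃ k : Fin r, (i : ℕ) = k + 1 :=
            ⟨⟨i - 1, by have := i.2; omega⟩, by simp; omega⟩
          rcases hi with h | h
          · exact ⟨- ee n k, ⟨k, Or.inr rfl⟩, k, i, hk, by omega, Or.inl (by rw [h]; abel)⟩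
          · exact ⟨ee n k, ⟨k, Or.inl rfl⟩, k, i, hk, by omega, Or.inr (by rw [h]; abel)⟩
        · have : i = i1 := Fin.ext (by omega)
          subst this
          rcases hi with h | h
          · exact ⟨- ee n i2, ⟨i2, Or.inr rfl⟩, i, i2, by omega, by omega, Or.inl (by rw [h]; abel)⟩
          · exact ⟨ee n i2, ⟨i2, Or.inl rfl⟩, i, i2, by omega, by omega, Or.inr (by rw [h]; abel)⟩
      obtain ⟨v, hv, hT⟩ := this
      obtain ⟨w, rfl⟩ := hψ.2 v
      have hw := (hSS w).2 hv
      rw [← c1, hcc, c1] at hT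
      obtain ⟨j, hj⟩ := hw
      obtain ⟨k, l, hkl, hk, hT⟩ := hT
      have b := PM_supp2 (hne k l hkl) hT
      by_cases hj0 : i0 = j
      · subst hj0
        have a := PM_sub_supp' hu hj
        have e1 := a k ((b k).2 (Or.inl rfl))
        rw [e1] at hk; omega
      · have a := PM_sub_supp hu hj hj0
        rcases (b i0).1 ((a i0).2 (Or.inl rfl)) with e | e <;> have := congrArg Fin.val e <;> omega
    have main : ∀ m : ℕ, ∀ k : Fin r, (k : ℕ) = m → ∀ u, PM (ee n k) u → PM (ee n k) (ψ u) := by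
      intro m
      induction m using Nat.strong_induction_on with
      | _ m ih =>
        intro k hk u hu
        by_cases hm : m = 0
        · have : k = i0 := Fin.ext (by omega)
          subst this; exact claim0 u hu
        obtain ⟨q, hq⟩ : ∃ q : Fin r, (k : ℕ) = q + 1 :=
            ⟨⟨k - 1, by have := k.2; omega⟩, by simp; omega⟩
        obtain ⟨j, hj⟩ := (hSS u).1 ⟨k, hu⟩
        -- j is not smaller than k
        have hjk : ¬ (j : ℕ) < k := by
          intro hlt
          have a1 := ih j (by omega) j rfl (ee n j) (Or.inl rfl)
          have a2 := ih j (by omega) j rfl (-ee n j) (Or.inr rfl)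
          have hinv : ∃ v, PM (ee n j) v ∧ ψ v = ψ u := by
            have hne' : ψ (ee n j) = ψ (-ee n j) → ee n j = - ee n j := fun h => hψ.1 h
            rcases a1 with a1 | a1 <;> rcases a2 with a2 | a2 <;> rcases hj with hj | hj
            · exact ⟨_, Or.inl rfl, a1.trans hj.symm⟩
            · refine ⟨_, Or.inl rfl, a1.trans ((hne' (a1.trans a2.symm)).trans hj.symm)⟩
            · exact ⟨_, Or.inl rfl, a1.trans hj.symm⟩
            · exact ⟨_, Or.inr rfl, a2.trans hj.symm⟩
            · exact ⟨_, Or.inr rfl, a2.trans hj.symm⟩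
            · exact ⟨_, Or.inl rfl, a1.trans hj.symm⟩
            · refine ⟨_, Or.inl rfl, a1.trans ((hne' (a1.trans a2.symm)).symm.trans hj.symm)⟩
            · exact ⟨_, Or.inl rfl, a1.trans hj.symm⟩
          obtain ⟨v, hv, hvu⟩ := hinv
          have := hψ.1 hvu
          subst this
          have := (PM_supp hu j).1 ((PM_supp hv j).2 rfl)
          rw [this] at hlt; omega
        -- the neighbour
        have hv : ∃ v, PM (ee n q) v ∧ PM (ee n q + ee n k) (u - v) := by
          rcases hu with h | h
          · exact ⟨- ee n q, Or.inr rfl, Or.inl (by rw [h]; abel)⟩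
          · exact ⟨ee n q, Or.inl rfl, Or.inr (by rw [h]; abel)⟩
        obtain ⟨v, hv, huv⟩ := hv
        have hv' := ih q (by omega) q rfl v hv
        have hcol : ∃ a b : Fin r, (b : ℕ) = a + 1 ∧ PM (ee n a + ee n b) (ψ u - ψ v) := by
          by_cases hq1 : 1 ≤ (q : ℕ)
          · have : T1 (u - v) := ⟨q, k, hq, hq1, huv⟩
            rw [← c1, ← hcc, c1] at this
            obtain ⟨a, b, hab, _, h⟩ := this
            exact ⟨a, b, hab, h⟩
          · have e0 : q = i0 := Fin.ext (by omega)
            have e1 : k = i1 := Fin.ext (by omega)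
            have : T2 (u - v) := by rw [e0, e1] at huv; exact huv
            rw [← c2, ← hcc, c2] at this
            exact ⟨i0, i1, by omega, this⟩
        obtain ⟨a, b, hab, hPM⟩ := hcol
        have hjq : j ≠ q := by intro h; rw [h] at hjk; omega
        have s1 := PM_supp2 (hne a b hab) hPM
        have s2 := PM_sub_supp hj hv' hjq
        have t1 := (s1 j).1 ((s2 j).2 (Or.inl rfl))
        have t2 := (s1 q).1 ((s2 q).2 (Or.inr rfl))
        have : j = k := by
          apply Fin.ext
          rcases t1 with t1 | t1 <;> rcases t2 with t2 | t2
          · exact absurd (t1.trans t2.symm) hjq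
          · have := congrArg Fin.val t1; have := congrArg Fin.val t2; omega
          · have := congrArg Fin.val t1; have := congrArg Fin.val t2; omega
          · exact absurd (t1.trans t2.symm) hjq
        rwa [← this]
    exact fun k => main k k rfl

end Coord
end GRab

namespace GRab

theorem inv_of_inj {T : Type*} [Finite T] {P : T → Prop} {ψ : T → T} (hψ : Function.Injective ψ)
    (h : ∀ u, P u → P (ψ u)) (u : T) (hu : P (ψ u)) : P u := by
  have h1 : ψ '' {x | P x} = {x | P x} := by
    apply Set.eq_of_subset_of_ncard_le
    · rintro _ ⟨x, hx, rfl⟩; exact h x hx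
    · rw [Set.ncard_image_of_injective _ hψ]
    · exact Set.toFinite _
  have h2 : ψ u ∈ ψ '' {x | P x} := by rw [h1]; exact hu
  obtain ⟨v, hv, hvu⟩ := h2
  rw [← hψ hvu]; exact hv

section Two
variable {n : Fin 2 → ℕ}

open Classical in
theorem intcol_two (hn : ∀ i, 1 < n i) (hmono : Monotone n)
    (E : ((i : Fin 2) → ZMod (n i)) → Prop)
    (hE : (4 ≤ n 1 ∨ (n 0 = 2 ∧ n 1 = 3)) ∨ E = PM (ee n 0)) :
    ∃ c, IntCol ((i : Fin 2) → ZMod (n i)) E c := by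
  have : ∀ i, Fact (1 < n i) := fun i => ⟨hn i⟩
  have : ∀ i, NeZero (n i) := fun i => ⟨by have := hn i; omega⟩
  have d01 : (0 : Fin 2) ≠ 1 := by decide
  have hle : n 0 ≤ n 1 := hmono (by decide)
  obtain ⟨S, hS⟩ : ∃ S : ((i : Fin 2) → ZMod (n i)) → Prop, ∀ x, S x ↔ ∃ i, PM (ee n i) x :=
    ⟨_, fun _ => Iff.rfl⟩
  have hS' : ∀ x, S x ↔ PM (ee n 0) x ∨ PM (ee n 1) x := by
    intro x; rw [hS]; exact Fin.exists_fin_two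
  obtain ⟨D, hD⟩ : ∃ D : ((i : Fin 2) → ZMod (n i)) → Prop, ∀ x, D x ↔ PM (ee n 0 + ee n 1) x :=
    ⟨_, fun _ => Iff.rfl⟩
  obtain ⟨T, hT⟩ : ∃ T : ((i : Fin 2) → ZMod (n i)) → Prop,
    ∀ x, T x ↔ 4 ≤ n 1 ∧ PM (ee n 1 + ee n 1) x := ⟨_, fun _ => Iff.rfl⟩
  have z2 : 4 ≤ n 1 → ∀ m : ℕ, 0 < m → m < 4 → ((m : ℕ) : ZMod (n 1)) ≠ 0 := by
    intro h m hm hm' h0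
    rw [ZMod.natCast_eq_zero_iff] at h0
    have := Nat.le_of_dvd hm h0
    omega
  have T0 : ∀ x, T x → x 0 = 0 := by
    intro x hx
    rcases ((hT x).1 hx).2 with rfl | rfl <;> simp [ee_ne d01]
  have T1 : ∀ x, T x → x 1 ≠ 0 := by
    intro x hx
    have h2 := z2 ((hT x).1 hx).1 2 (by omega) (by omega)
    rcases ((hT x).1 hx).2 with rfl | rfl <;> simp [ee_same] <;> intro h <;> apply h2 <;> push_cast
    · rw [← h]; norm_num
    · linear_combination -h
  have TS : ∀ x, T x → ¬ S x := by
    intro x hx h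
    have h0 := T0 x hx
    rcases (hS' x).1 h with h | h
    · exact (PM_supp h 0).2 rfl h0
    · have h1 := z2 ((hT x).1 hx).1 1 (by omega) (by omega)
      have h3 := z2 ((hT x).1 hx).1 3 (by omega) (by omega)
      rcases ((hT x).1 hx).2 with e | e <;> rcases h with h | h <;>
        have e' := congrFun (h.symm.trans e) 1 <;> simp [ee_same] at e'
      · apply h3; push_cast; linear_combination -e'
      · apply h3; push_cast; linear_combination e'
  have SD : ∀ x, D x → ¬ S x := by
    intro x hx h
    have a := PM_supp2 d01 ((hD x).1 hx)
    rcases (hS' x).1 h with h | h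
    · exact d01 ((PM_supp h 1).1 ((a 1).2 (Or.inr rfl))).symm
    · exact d01 ((PM_supp h 0).1 ((a 0).2 (Or.inl rfl)))
  have TD : ∀ x, T x → ¬ D x := by
    intro x hx h
    exact (PM_supp2 d01 ((hD x).1 h) 0).2 (Or.inl rfl) (T0 x hx)
  obtain ⟨c, hc⟩ : ∃ c : ((i : Fin 2) → ZMod (n i)) → Fin 4, ∀ x, c x =
    if S x then 3 else if D x then 2 else if T x then 1 else 0 := ⟨_, fun _ => rfl⟩
  have c3 : ∀ x, c x = 3 ↔ S x := by
    intro x; rw [hc]; split_ifs <;> simp_all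
  have c2 : ∀ x, c x = 2 ↔ D x := by
    intro x; rw [hc]
    by_cases d : D x
    · rw [if_neg (SD x d), if_pos d]; simp [d]
    · split_ifs <;> simp_all
  have c1 : ∀ x, c x = 1 ↔ T x := by
    intro x; rw [hc]
    by_cases d : T x
    · rw [if_neg (TS x d), if_neg (TD x d), if_pos d]; simp [d]
    · split_ifs <;> simp_all
  have hzS : ¬ S 0 := by
    intro h; obtain ⟨i, hi⟩ := (hS 0).1 h
    exact (PM_supp hi i).2 rfl rfl
  have hee : ee n 0 ≠ ee n 1 := by
    intro h
    have := congrFun h 0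
    rw [ee_same, ee_ne d01] at this
    exact one_ne_zero this
  refine ⟨c, ?_⟩
  apply intcol_core hn hmono
  · rw [hc, if_neg hzS, if_neg, if_neg]
    · intro h; exact T1 _ h rfl
    · intro h; exact (PM_supp2 d01 ((hD _).1 h) 0).2 (Or.inl rfl) rfl
  · intro x; simp only [hc, hS, hD, hT, PM_neg_iff]
  · intro x; rw [c3, hS]
  · intro _
    by_cases h1 : 2 < n 1
    · refine ncard_lt_three (ee n 0 + ee n 1) (-(ee n 0 + ee n 1)) (ee n 0) (ee n 1) (- ee n 1)
        ?_ hee ?_ ?_ ?_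
      · intro x hx
        exact (hD x).1 ((c2 x).1 hx)
      · intro h
        have := congrFun h 0
        simp [ee_same, ee_ne d01] at this
      · intro h
        have := congrFun h 1
        simp only [ee_same, Pi.neg_apply] at this
        exact one_ne_neg_one' h1 this
      · rintro x (rfl | rfl | rfl)
        · exact (c3 _).2 ((hS _).2 ⟨0, Or.inl rfl⟩)
        · exact (c3 _).2 ((hS _).2 ⟨1, Or.inl rfl⟩)
        · exact (c3 _).2 ((hS _).2 ⟨1, Or.inr rfl⟩)
    · have hn1 : n 1 = 2 := by have := hn 1; omega
      have hn0 : n 0 = 2 := by have := hn 0; omega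
      have hneg : ∀ x : (i : Fin 2) → ZMod (n i), -x = x := by
        have key : ∀ m : ℕ, m = 2 → ∀ y : ZMod m, -y = y := by
          rintro m rfl; decide
        intro x; funext i
        fin_cases i
        · exact key _ hn0 _
        · exact key _ hn1 _
      have a1 : {x | c x = 2}.ncard ≤ 1 := by
        rw [← Set.ncard_singleton (ee n 0 + ee n 1)]
        refine Set.ncard_le_ncard ?_ (Set.toFinite _)
        intro x hx
        rcases (hD x).1 ((c2 x).1 hx) with h | h
        · exact h
        · rw [hneg] at h; exact h
      have a2 : ({ee n 0, ee n 1} : Set ((i : Fin 2) → ZMod (n i))).ncard = 2 :=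
        Set.ncard_pair hee
      have a3 : ({ee n 0, ee n 1} : Set ((i : Fin 2) → ZMod (n i))).ncard ≤ {x | c x = 3}.ncard := by
        refine Set.ncard_le_ncard ?_ (Set.toFinite _)
        rintro x (rfl | rfl)
        · exact (c3 _).2 ((hS _).2 ⟨0, Or.inl rfl⟩)
        · exact (c3 _).2 ((hS _).2 ⟨1, Or.inl rfl⟩)
      omega
  · intro i j hij hi heq
    have e0 : i = 0 := Fin.ext (by have := j.2; simp; omega)
    have e1 : j = 1 := Fin.ext (by rw [e0] at hij; simpa using hij)
    subst e0; subst e1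
    have : D (ee n 0 + ee n 1) := (hD _).2 (Or.inl rfl)
    rw [(c2 _).2 this, c2, hD] at heq
    rcases heq with h | h
    · have := congrFun h 1
      simp only [Pi.sub_apply, Pi.add_apply, ee_same, ee_ne d01.symm] at this
      exact one_ne_neg_one' (lt_of_lt_of_le hi hle) (by simpa using this.symm)
    · have := congrFun h 0
      simp only [Pi.sub_apply, Pi.add_apply, Pi.neg_apply, ee_same, ee_ne d01] at this
      exact one_ne_neg_one' hi (by simpa using this)
  · intro ψ hψ hψ0 hcc hEE
    have hSS : ∀ u, S u ↔ S (ψ u) := by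
      intro u
      have := hcc u 0
      rw [hψ0, sub_zero, sub_zero] at this
      rw [← c3, ← c3, this]
    have hPQ : ∀ u, PM (ee n 0) u → ¬ PM (ee n 1) u := by
      intro u h0 h1
      exact d01 ((PM_supp h1 0).1 ((PM_supp h0 0).2 rfl))
    have fin1 : (∀ u, PM (ee n 0) u → PM (ee n 0) (ψ u)) →
        ∀ k u, PM (ee n k) u → PM (ee n k) (ψ u) := by
      intro H k u hu
      fin_cases k
      · exact H u hu
      · have h1 : S (ψ u) := (hSS u).1 ((hS u).2 ⟨1, hu⟩)
        rcases (hS' _).1 h1 with h | h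
        · exact absurd hu (hPQ u (inv_of_inj hψ.1 H u h))
        · exact h
    have fin2 : ∀ k : Fin 4, (∀ u, PM (ee n 1) u → c (u - (-u)) = k) →
        (∀ u v, PM (ee n 0) u → S v → c (u - v) ≠ k) →
        ∀ k u, PM (ee n k) u → PM (ee n k) (ψ u) := by
      intro k h1 h2
      apply fin1
      intro u hu
      have h3 : S (ψ u) := (hSS u).1 ((hS u).2 ⟨0, hu⟩)
      rcases (hS' _).1 h3 with h | h
      · exact h
      · obtain ⟨v, hv⟩ := hψ.2 (-(ψ u))
        have hvS : S v := by
          rw [hSS, hv, hS]; exact ⟨1, h.neg⟩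
        have := h1 _ h
        rw [← hv, hcc] at this
        exact absurd this (h2 u v hu hvS)
    rcases hE with (h4 | ⟨h2, h3⟩) | hE
    · apply fin2 1
      · intro u hu
        rw [c1, hT]
        refine ⟨h4, ?_⟩
        rcases hu with h | h
        · left; rw [h]; abel
        · right; rw [h]; abel
      · intro u v hu hv h
        rw [c1] at h
        rcases (hS' v).1 hv with hv | hv
        · have := PM_sub_supp' hu hv 1 (T1 _ h)
          exact d01 this.symm
        · exact (PM_sub_supp hu hv d01 0).2 (Or.inl rfl) (T0 _ h)
    · have key2 : ∀ m : ℕ, m = 2 → ∀ y : ZMod m, -y = y := by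
        rintro m rfl; decide
      have key3 : ∀ m : ℕ, m = 3 → ∀ y : ZMod m, y + y = -y := by
        rintro m rfl; decide
      apply fin2 3
      · intro u hu
        rw [c3, hS]
        refine ⟨1, ?_⟩
        have : u - -u = -u := by
          funext i
          fin_cases i
          · have : u 0 = 0 := by
              by_contra h; exact d01 ((PM_supp hu 0).1 h)
            simp [this]
          · have := key3 _ h3 (u 1)
            simpa using this
        rw [this]; exact hu.neg
      · intro u v hu hv h
        rw [c3, hS'] at h
        rcases (hS' v).1 hv with hv | hv
        · have e : ∀ w, PM (ee n 0) w → w = ee n 0 := by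
            rintro w (h | h)
            · exact h
            · rw [h]; funext i
              fin_cases i
              · exact key2 _ h2 _
              · simp [ee_ne d01.symm]
          rw [e u hu, e v hv, sub_self] at h
          exact hzS ((hS' _).2 h)
        · have a := PM_sub_supp hu hv d01
          rcases h with h | h
          · exact d01 ((PM_supp h 1).1 ((a 1).2 (Or.inr rfl))).symm
          · exact d01 ((PM_supp h 0).1 ((a 0).2 (Or.inl rfl)))
    · subst hE
      apply fin1
      intro u hu
      have := hEE u 0 (by simpa using hu)
      rwa [hψ0, sub_zero] at this

end Two
end GRab

namespace GRab

theorem IntCol.transport {B B' : Type*} [AddCommGroup B] [AddCommGroup B'] (e : B ≃+ B')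
    {E : B' → Prop} {c : B' → Fin 4} (h : IntCol B' E c) :
    IntCol B (fun x => E (e x)) (fun x => c (e x)) where
  zero := by simp [h.zero]
  even := by intro x; simp [h.even]
  gen := by
    have h1 := congrArg (AddSubgroup.map e.symm.toAddMonoidHom) h.gen
    rw [AddMonoidHom.map_closure, ← AddMonoidHom.range_eq_map,
      AddMonoidHom.range_eq_top.2 e.symm.surjective] at h1
    rw [← h1]
    congr 1
    ext x
    constructor
    · intro hx
      exact ⟨e x, hx, by simp⟩
    · rintro ⟨y, hy, rfl⟩
      simpa using hy
  cnt := by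
    intro hB
    have : Nontrivial B' := e.symm.toEquiv.nontrivial
    have key : ∀ k : Fin 4, {x | c (e x) = k}.ncard = {x | c x = k}.ncard := by
      intro k
      rw [← Set.ncard_image_of_injective _ e.injective]
      congr 1
      ext x
      constructor
      · rintro ⟨y, hy, rfl⟩; exact hy
      · intro hx; exact ⟨e.symm x, by simpa using hx, by simp⟩
    rw [key, key]
    exact h.cnt this
  rigid := by
    intro φ hφ hc hE
    have := h.rigid (fun y => e (φ (e.symm y)))
      (e.bijective.comp (hφ.comp e.symm.bijective)) ?_ ?_
    · rcases this with ⟨t, ht⟩ | ⟨t, ht⟩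
      · left; refine ⟨e.symm t, fun x => ?_⟩
        apply e.injective
        have := ht (e x)
        simpa using this
      · right; refine ⟨e.symm t, fun x => ?_⟩
        apply e.injective
        have := ht (e x)
        simpa using this
    · intro x y
      have := hc (e.symm x) (e.symm y)
      simpa using this
    · intro x y hxy
      have := hE (e.symm x) (e.symm y) (by simpa using hxy)
      simpa using this

/-- The exceptional groups: `Z_p^2`, for `p = 2, 3`. -/
def Exc (p : ℕ) (B : Type*) [AddCommGroup B] : Prop := Nonempty (B ≃+ (Fin 2 → ZMod p))

theorem exists_coord (B : Type*) [AddCommGroup B] [Finite B] :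
    ∃ (r : ℕ) (n : Fin r → ℕ), (∀ i, 1 < n i) ∧ Monotone n ∧
      Nonempty (B ≃+ ((i : Fin r) → ZMod (n i))) := by
  obtain ⟨ι, hι, n, hn, ⟨e⟩⟩ := AddCommGroup.equiv_directSum_zmod_of_finite' B
  let f := Fintype.equivFin ι
  let m : Fin (Fintype.card ι) → ℕ := n ∘ f.symm
  let g : Fin (Fintype.card ι) ≃ ι := (Tuple.sort m).trans f.symm
  refine ⟨Fintype.card ι, n ∘ g, fun i => hn _, Tuple.monotone_sort m, ⟨?_⟩⟩
  exact (e.trans (DirectSum.addEquivProd _)).trans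
    (RingEquiv.piCongrLeft (fun i => ZMod (n i)) g).symm.toAddEquiv

theorem int1 (B : Type*) [AddCommGroup B] [Finite B] (h2 : ¬ Exc 2 B) (h3 : ¬ Exc 3 B) :
    ∃ c, IntCol B (fun _ => True) c := by
  obtain ⟨r, n, hn, hm, ⟨e⟩⟩ := exists_coord B
  suffices h : ∃ c, IntCol ((i : Fin r) → ZMod (n i)) (fun _ => True) c by
    obtain ⟨c, hc⟩ := h
    exact ⟨_, hc.transport e⟩
  rcases Nat.lt_or_ge r 2 with hr | hr
  · exact intcol_one hn (by omega)
  rcases Nat.lt_or_ge 2 r with hr' | hr'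
  · exact intcol_three hn hm hr'
  obtain rfl : r = 2 := by omega
  apply intcol_two hn hm
  left
  by_contra hcon
  have hle : n 0 ≤ n 1 := hm (by decide)
  have a0 := hn 0
  have a1 := hn 1
  have key : ∀ p, n 0 = p → n 1 = p → Exc p B := by
    intro p h h'
    have : n = fun _ => p := by
      funext i; fin_cases i
      · exact h
      · exact h'
    subst this
    exact ⟨e⟩
  have k2 : ¬ (n 0 = 2 ∧ n 1 = 2) := fun h => h2 (key 2 h.1 h.2)
  have k3 : ¬ (n 0 = 3 ∧ n 1 = 3) := fun h => h3 (key 3 h.1 h.2)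
  omega

theorem aut_to_e0 (p : ℕ) [Fact p.Prime] (h : Fin 2 → ZMod p) (hh : h ≠ 0) :
    ∃ f : (Fin 2 → ZMod p) ≃+ (Fin 2 → ZMod p), f h = ee (fun _ : Fin 2 => p) 0 := by
  have hprime : p.Prime := Fact.out
  by_cases h0 : h 0 = 0
  · have h1 : h 1 ≠ 0 := by
      intro h1; apply hh; funext i; fin_cases i
      · exact h0
      · exact h1
    let f : (Fin 2 → ZMod p) ≃+ (Fin 2 → ZMod p) :=
      { toFun := fun x => ![x 1 / h 1, x 0]
        invFun := fun y => ![y 1, y 0 * h 1]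
        left_inv := by intro x; funext i; fin_cases i <;> simp [h1]
        right_inv := by intro x; funext i; fin_cases i <;> simp [h1]
        map_add' := by intro x y; funext i; fin_cases i <;> simp [add_div] }
    refine ⟨f, ?_⟩
    funext i; fin_cases i
    · simp [f, h1, ee]
    · simp [f, h0, ee]
  · let f : (Fin 2 → ZMod p) ≃+ (Fin 2 → ZMod p) :=
      { toFun := fun x => ![x 0 / h 0, x 1 - x 0 / h 0 * h 1]
        invFun := fun y => ![y 0 * h 0, y 1 + y 0 * h 1]
        left_inv := by intro x; funext i; fin_cases i <;> simp [h0]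
        right_inv := by intro x; funext i; fin_cases i <;> simp [h0]
        map_add' := by
          intro x y; funext i
          fin_cases i
          · simp [add_div]
          · simp; ring }
    refine ⟨f, ?_⟩
    funext i; fin_cases i
    · simp [f, h0, ee]
    · simp [f, h0, ee]

theorem int2 (p : ℕ) (hp : p = 2 ∨ p = 3) (B : Type*) [AddCommGroup B] (hB : Exc p B)
    (h : B) (hh : h ≠ 0) : ∃ c, IntCol B (PM h) c := by
  have : Fact p.Prime := ⟨by rcases hp with rfl | rfl <;> norm_num⟩
  have hp1 : 1 < p := Nat.Prime.one_lt Fact.out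
  obtain ⟨e⟩ := hB
  obtain ⟨f, hf⟩ := aut_to_e0 p (e h) (by simpa using hh)
  obtain ⟨c, hc⟩ := intcol_two (n := fun _ => p) (fun _ => hp1) (fun _ _ _ => le_rfl) _ (Or.inr rfl)
  have := hc.transport (e.trans f)
  refine ⟨fun x => c ((e.trans f) x), ?_⟩
  convert this using 2 with x
  unfold PM
  have hg : (e.trans f) h = ee (fun _ : Fin 2 => p) 0 := hf
  rw [← hg, ← map_neg]
  simp only [EmbeddingLike.apply_eq_iff_eq]

theorem Exc.card {p : ℕ} [NeZero p] {B : Type*} [AddCommGroup B] (h : Exc p B) :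
    Nat.card B = p ^ 2 := by
  obtain ⟨e⟩ := h
  rw [Nat.card_congr e.toEquiv]; simp

theorem Exc.smul {p : ℕ} {B : Type*} [AddCommGroup B] (h : Exc p B) (x : B) : p • x = 0 := by
  obtain ⟨e⟩ := h
  apply e.injective
  rw [map_nsmul, map_zero]
  funext i; simp

end GRab

namespace GRab

open Classical in
theorem label_aux {ι : Type*} [Finite ι] (M : ι → ι → Prop) (hs : ∀ i j, M i j → M j i)
    (hm : ∀ i j k, M i j → M i k → j = k) (S : Finset ι) (hS : 3 ≤ S.card) :
    ∃ l : ι → ι → Fin 3, (∀ i j, l i j = l j i) ∧ ∀ π : Equiv.Perm ι, (∀ i ∈ S, π i ∈ S) →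
      (∀ i ∈ S, ∀ j ∈ S, M (π i) (π j) ↔ M i j) →
      (∀ i ∈ S, ∀ j ∈ S, i ≠ j → ¬ M i j → l (π i) (π j) = l i j) → ∀ i ∈ S, π i = i := by
  induction S using Finset.induction_on with
  | empty => simp at hS
  | insert v S hv ih =>
    rw [Finset.card_insert_of_notMem hv] at hS
    by_cases h3 : 3 ≤ S.card
    · obtain ⟨l, hl, hπ⟩ := ih h3
      -- vertices have non-M edges
      have hedge : ∀ u ∈ S, ∃ w ∈ S, w ≠ u ∧ ¬ M u w := by
        intro u hu
        have h2 : 1 < (S.erase u).card := by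
          rw [Finset.card_erase_of_mem hu]; omega
        obtain ⟨a, ha, b, hb, hab⟩ := Finset.one_lt_card.1 h2
        rw [Finset.mem_erase] at ha hb
        by_cases hMa : M u a
        · exact ⟨b, hb.2, hb.1, fun h => hab (hm _ _ _ hMa h)⟩
        · exact ⟨a, ha.2, ha.1, hMa⟩
      have hp : ∃ p : Fin 3, ∀ u ∈ S, ¬ ∀ w ∈ S, w ≠ u → ¬ M u w → l u w = p := by
        by_contra hcon
        push Not at hcon
        choose u hu hmono using hcon
        have hne : ∀ p q, p ≠ q → u p ≠ u q := by
          intro p q hpq h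
          obtain ⟨w, hw, hwu, hMw⟩ := hedge (u p) (hu p)
          have a := hmono p w hw hwu hMw
          have b := hmono q w hw (h ▸ hwu) (h ▸ hMw)
          rw [← h, a] at b
          exact hpq b
        have hM : ∀ p q, p ≠ q → M (u p) (u q) := by
          intro p q hpq
          by_contra hcon
          have a := hmono p (u q) (hu q) (hne p q hpq).symm hcon
          have b := hmono q (u p) (hu p) (hne p q hpq) (fun h => hcon (hs _ _ h))
          rw [hl, a] at b
          exact hpq b
        exact hne 1 2 (by decide) (hm _ _ _ (hM 0 1 (by decide)) (hM 0 2 (by decide)))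
      obtain ⟨p, hp⟩ := hp
      refine ⟨fun i j => if i = v ∨ j = v then p else l i j, ?_, ?_⟩
      · intro i j
        simp only [or_comm (a := i = v), hl i j]
      · intro π hπS hπM hπl
        have hvv : π v = v := by
          by_contra hcon
          have hu : π v ∈ S := Finset.mem_of_mem_insert_of_ne
            (hπS v (Finset.mem_insert_self _ _)) hcon
          apply hp _ hu
          intro w hw hwu hMw
          have hw' : π.symm w ∈ insert v S := by
            refine inv_of_inj (P := fun x => x ∈ insert v S) π.injective hπS _ ?_
            simp [hw]
          have hwv : v ≠ π.symm w := by
            intro h; apply hwu; rw [h]; simp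
          have h1 := hπM v (Finset.mem_insert_self _ _) _ hw'
          have h2 := hπl v (Finset.mem_insert_self _ _) _ hw' hwv
          rw [Equiv.apply_symm_apply] at h1 h2
          have h3 := h2 (fun h => hMw (h1.2 h))
          have hwv' : w ≠ v := fun h => hv (h ▸ hw)
          simpa [hcon, hwv'] using h3
        have hSv : ∀ i ∈ S, i ≠ v := fun i hi h => hv (h ▸ hi)
        have hSS : ∀ i ∈ S, π i ∈ S := by
          intro i hi
          refine Finset.mem_of_mem_insert_of_ne (hπS i (Finset.mem_insert_of_mem hi)) ?_
          intro h
          exact hSv i hi (π.injective (h.trans hvv.symm))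
        have := hπ π hSS
          (fun i hi j hj => hπM i (Finset.mem_insert_of_mem hi) j (Finset.mem_insert_of_mem hj))
          (by
            intro i hi j hj hij hM
            have := hπl i (Finset.mem_insert_of_mem hi) j (Finset.mem_insert_of_mem hj) hij hM
            simpa [hSv i hi, hSv j hj, hSv _ (hSS i hi), hSv _ (hSS j hj)] using this)
        intro i hi
        rcases Finset.mem_insert.1 hi with rfl | hi
        · exact hvv
        · exact this i hi
    · obtain ⟨a, b, hab, rfl⟩ := Finset.card_eq_two.1 (by omega : S.card = 2)
      have hva : v ≠ a := by rintro rfl; simp at hv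
      have hvb : v ≠ b := by rintro rfl; simp at hv
      refine ⟨fun i j => if (i = v ∧ j = a) ∨ (i = a ∧ j = v) then 0 else
        if (i = v ∧ j = b) ∨ (i = b ∧ j = v) then 1 else 2, ?_, ?_⟩
      · intro i j
        have h1 : ∀ x y : ι, ((i = x ∧ j = y) ∨ (i = y ∧ j = x)) ↔
          ((j = x ∧ i = y) ∨ (j = y ∧ i = x)) := by intros; tauto
        simp only [h1]
      · intro π hπS hπM hπl
        have m1 := hm v a b
        have m2 := hm a v b
        have m3 := hm b v a
        have s1 := hs v a
        have s2 := hs v b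
        have s3 := hs a b
        have s4 := hs a v
        have s5 := hs b v
        have s6 := hs b a
        have i1 : π v ≠ π a := fun h => hva (π.injective h)
        have i2 : π v ≠ π b := fun h => hvb (π.injective h)
        have i3 : π a ≠ π b := fun h => hab (π.injective h)
        have e1 := hπM v (by simp) a (by simp)
        have e2 := hπM v (by simp) b (by simp)
        have e3 := hπM a (by simp) b (by simp)
        have f1 := hπl v (by simp) a (by simp) hva
        have f2 := hπl v (by simp) b (by simp) hvb
        have f3 := hπl a (by simp) b (by simp) hab
        have p1 := hπS v (by simp)
        have p2 := hπS a (by simp)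
        have p3 := hπS b (by simp)
        have g1 : ¬ (M v a ∧ M v b) := fun h => hab (m1 h.1 h.2)
        have g2 : ¬ (M v a ∧ M a b) := fun h => hvb (m2 (s1 h.1) h.2)
        have g3 : ¬ (M v b ∧ M a b) := fun h => hva (m3 (s2 h.1) (s3 h.2))
        have q1 : M v a ↔ M a v := ⟨s1, s4⟩
        have q2 : M v b ↔ M b v := ⟨s2, s5⟩
        have q3 : M a b ↔ M b a := ⟨s3, s6⟩
        clear m1 m2 m3 s1 s2 s3 s4 s5 s6 hπS hπM hπl ih hm hs hS h3
        simp only [Finset.mem_insert, Finset.mem_singleton] at p1 p2 p3 ⊢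
        have : π v = v ∧ π a = a ∧ π b = b := by
          rcases p1 with p1 | p1 | p1 <;> rcases p2 with p2 | p2 | p2 <;>
            rcases p3 with p3 | p3 | p3 <;> rw [p1, p2] at i1 <;> rw [p1, p3] at i2 <;>
            rw [p2, p3] at i3 <;> (first
              | exact absurd rfl i1
              | exact absurd rfl i2
              | exact absurd rfl i3
              | exact ⟨p1, p2, p3⟩
              | skip)
          all_goals
            exfalso
            rw [p1, p2] at e1 f1
            rw [p1, p3] at e2 f2
            rw [p2, p3] at e3 f3
            simp [hva, hvb, hab, hva.symm, hvb.symm, hab.symm] at f1 f2 f3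
            clear p1 p2 p3 i1 i2 i3 hva hvb hab hv
            by_cases w1 : M v a <;> by_cases w2 : M v b <;> by_cases w3 : M a b <;> simp_all
        rintro i (rfl | rfl | rfl)
        · exact this.1
        · exact this.2.1
        · exact this.2.2

theorem label_lemma {ι : Type*} [Finite ι] (M : ι → ι → Prop) (hs : ∀ i j, M i j → M j i)
    (hm : ∀ i j k, M i j → M i k → j = k) (hS : 3 ≤ Nat.card ι) :
    ∃ l : ι → ι → Fin 3, (∀ i j, l i j = l j i) ∧ ∀ π : Equiv.Perm ι,
      (∀ i j, M (π i) (π j) ↔ M i j) →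
      (∀ i j, i ≠ j → ¬ M i j → l (π i) (π j) = l i j) → ∀ i, π i = i := by
  have := Fintype.ofFinite ι
  obtain ⟨l, hl, h⟩ := label_aux M hs hm Finset.univ (by simpa [Nat.card_eq_fintype_card] using hS)
  exact ⟨l, hl, fun π h1 h2 i => h π (by simp) (fun i _ j _ => h1 i j)
    (fun i _ j _ => h2 i j) i (by simp)⟩

end GRab

namespace GRab

/-- Every permutation preserving all orbits and all unordered orbitals comes from `A`. -/
def Closed (A X : Type*) [AddCommGroup A] [AddAction A X] : Prop :=
  ∀ σ : Equiv.Perm X, (∀ x, ∃ a : A, a +ᵥ x = σ x) →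
    (∀ x y, ∃ a : A, (a +ᵥ x = σ x ∧ a +ᵥ y = σ y) ∨ (a +ᵥ x = σ y ∧ a +ᵥ y = σ x)) →
    ∃ a : A, ∀ x, a +ᵥ x = σ x

/-- The action is represented by a 4-coloured graph. -/
def Rep (A X : Type*) [AddCommGroup A] [AddAction A X] : Prop :=
  ∃ γ : Sym2 X → Fin 4, ∀ σ : Equiv.Perm X,
    (∃ a : A, ∀ x, a +ᵥ x = σ x) ↔ ∀ x y, x ≠ y → γ s(σ x, σ y) = γ s(x, y)

/-- Coordinates on an `A`-set. -/
structure Coord (A X ι : Type*) [AddCommGroup A] [AddAction A X] where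
  K : ι → AddSubgroup A
  pt : ι → A → X
  surj : ∀ x, ∃ i a, pt i a = x
  eq_iff : ∀ i j a b, pt i a = pt j b ↔ i = j ∧ b - a ∈ K i
  vadd : ∀ g i a, g +ᵥ pt i a = pt i (g + a)

theorem exists_coord_set (A X : Type*) [AddCommGroup A] [AddAction A X] :
    Nonempty (Coord A X (AddAction.orbitRel.Quotient A X)) := by
  refine ⟨⟨fun i => AddAction.stabilizer A (Quotient.out i), fun i a => a +ᵥ Quotient.out i,
    ?_, ?_, ?_⟩⟩
  · intro x
    refine ⟨Quotient.mk _ x, ?_⟩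
    have h : (AddAction.orbitRel A X).r (Quotient.out (Quotient.mk (AddAction.orbitRel A X) x)) x :=
      Quotient.exact (Quotient.out_eq _)
    have h' := (AddAction.orbitRel A X).symm h
    exact AddAction.orbitRel_apply.1 h'
  · intro i j a b
    constructor
    · intro h
      have hij : i = j := by
        rw [← Quotient.out_eq i, ← Quotient.out_eq j]
        apply Quotient.sound
        change (AddAction.orbitRel A X) _ _
        rw [AddAction.orbitRel_apply]
        refine ⟨-a + b, ?_⟩
        change (-a + b) +ᵥ Quotient.out j = Quotient.out i
        rw [add_vadd, ← h, neg_vadd_vadd]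
      subst hij
      refine ⟨rfl, ?_⟩
      rw [AddAction.mem_stabilizer_iff, sub_eq_neg_add, add_vadd, ← h, neg_vadd_vadd]
    · rintro ⟨rfl, h⟩
      rw [AddAction.mem_stabilizer_iff, sub_eq_neg_add, add_vadd] at h
      rw [← vadd_neg_vadd a (b +ᵥ Quotient.out i), h]
  · intro g i a
    change g +ᵥ (a +ᵥ _) = (g + a) +ᵥ _
    rw [add_vadd]

section
variable {A X ι : Type*} [AddCommGroup A] [AddAction A X]

/-- `G` is a system of colour functions. -/
structure Sys (K : ι → AddSubgroup A) (G : ι → ι → A → Fin 4) : Prop where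
  symm : ∀ i j a, G j i (-a) = G i j a
  per : ∀ i j a k, k ∈ K i → G i j (a + k) = G i j a

theorem Sys.per' {K : ι → AddSubgroup A} {G : ι → ι → A → Fin 4} (h : Sys K G)
    (i j : ι) (a k : A) (hk : k ∈ K j) : G i j (a + k) = G i j a := by
  rw [← h.symm i j, neg_add, h.per j i _ _ (neg_mem hk), h.symm]

theorem Sys.perL {K : ι → AddSubgroup A} {G : ι → ι → A → Fin 4} (h : Sys K G)
    (i j : ι) (a k : A) (hk : k ∈ K i ⊔ K j) : G i j (a + k) = G i j a := by
  obtain ⟨y, hy, z, hz, rfl⟩ := AddSubgroup.mem_sup.1 hk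
  rw [← add_assoc, h.per' i j _ _ hz, h.per _ _ _ _ hy]

theorem Sys.congrL {K : ι → AddSubgroup A} {G : ι → ι → A → Fin 4} (h : Sys K G)
    (i j : ι) (a b : A) (hk : b - a ∈ K i ⊔ K j) : G i j b = G i j a := by
  rw [← h.perL i j a _ hk, add_sub_cancel]

theorem Coord.exists_col (D : Coord A X ι) {G : ι → ι → A → Fin 4} (h : Sys D.K G) :
    ∃ γ : Sym2 X → Fin 4, ∀ i j a b, γ s(D.pt i a, D.pt j b) = G i j (b - a) := by
  choose c r hcr using D.surj
  have key : ∀ i j a b, G (c (D.pt i a)) (c (D.pt j b)) (r (D.pt j b) - r (D.pt i a))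
      = G i j (b - a) := by
    intro i j a b
    have h1 := (D.eq_iff _ _ _ _).1 (hcr (D.pt i a))
    have h2 := (D.eq_iff _ _ _ _).1 (hcr (D.pt j b))
    generalize r (D.pt i a) = x at *
    generalize r (D.pt j b) = y at *
    rw [h1.1, h2.1] at *
    apply h.congrL
    have : y - x - (b - a) = (a - x) - (b - y) := by abel
    rw [this]
    exact sub_mem (AddSubgroup.mem_sup_left h1.2) (AddSubgroup.mem_sup_right h2.2)
  refine ⟨Sym2.lift ⟨fun x y => G (c x) (c y) (r y - r x), ?_⟩, ?_⟩
  · intro x y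
    change _ = G (c y) (c x) (r x - r y)
    rw [← h.symm (c y) (c x), neg_sub]
  · intro i j a b
    rw [Sym2.lift_mk]
    exact key i j a b

/-- Coordinates of an orbit preserving automorphism. -/
structure Fam (K : ι → AddSubgroup A) (G : ι → ι → A → Fin 4) (f : ι → A → A) : Prop where
  inj : ∀ i a b, f i b - f i a ∈ K i ↔ b - a ∈ K i
  surj : ∀ i b, ∃ a, b - f i a ∈ K i
  pres : ∀ i j a b, G i j (f j b - f i a) = G i j (b - a)

theorem Fam.sign {K : ι → AddSubgroup A} {G : ι → ι → A → Fin 4} {f : ι → A → A}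
    (hf : Fam K G f) (i : ι) (E : A ⧸ K i → Prop) (c : A ⧸ K i → Fin 4) (s : Equiv.Perm (Fin 4))
    (hc : IntCol (A ⧸ K i) E c) (hG : ∀ a, G i i a = s (c a))
    (hE : ∀ a b : A, E ((b - a : A) : A ⧸ K i) → E ((f i b - f i a : A) : A ⧸ K i)) :
    (∃ t, ∀ a, f i a - (a + t) ∈ K i) ∨ (∃ t, ∀ a, f i a - (-a + t) ∈ K i) := by
  have hφ : ∃ φ : A ⧸ K i → A ⧸ K i, ∀ a : A, φ a = (f i a : A) := by
    refine ⟨fun u => (f i (Quotient.out u) : A), fun a => ?_⟩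
    rw [QuotientAddGroup.eq, neg_add_eq_sub, hf.inj, ← neg_add_eq_sub, ← QuotientAddGroup.eq]
    exact QuotientAddGroup.out_eq' _
  obtain ⟨φ, hφ⟩ := hφ
  have hbij : Function.Bijective φ := by
    constructor
    · intro u v h
      obtain ⟨a, rfl⟩ := QuotientAddGroup.mk_surjective u
      obtain ⟨b, rfl⟩ := QuotientAddGroup.mk_surjective v
      rw [hφ, hφ, QuotientAddGroup.eq, neg_add_eq_sub, hf.inj] at h
      rw [QuotientAddGroup.eq, neg_add_eq_sub]; exact h
    · intro u
      obtain ⟨b, rfl⟩ := QuotientAddGroup.mk_surjective u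
      obtain ⟨a, ha⟩ := hf.surj i b
      refine ⟨a, ?_⟩
      rw [hφ, QuotientAddGroup.eq, neg_add_eq_sub]; exact ha
  have := hc.rigid φ hbij ?_ ?_
  · rcases this with ⟨t, ht⟩ | ⟨t, ht⟩
    · left
      obtain ⟨t, rfl⟩ := QuotientAddGroup.mk_surjective t
      refine ⟨t, fun a => ?_⟩
      have := ht a
      rw [hφ, ← QuotientAddGroup.mk_add, eq_comm, QuotientAddGroup.eq, neg_add_eq_sub] at this
      exact this
    · right
      obtain ⟨t, rfl⟩ := QuotientAddGroup.mk_surjective t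
      refine ⟨t, fun a => ?_⟩
      have := ht a
      rw [hφ, ← QuotientAddGroup.mk_neg, ← QuotientAddGroup.mk_add, eq_comm, QuotientAddGroup.eq,
        neg_add_eq_sub] at this
      exact this
  · intro u v
    obtain ⟨a, rfl⟩ := QuotientAddGroup.mk_surjective u
    obtain ⟨b, rfl⟩ := QuotientAddGroup.mk_surjective v
    rw [hφ, hφ, ← QuotientAddGroup.mk_sub, ← QuotientAddGroup.mk_sub]
    apply s.injective
    rw [← hG, ← hG, hf.pres]
  · intro u v
    obtain ⟨a, rfl⟩ := QuotientAddGroup.mk_surjective u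
    obtain ⟨b, rfl⟩ := QuotientAddGroup.mk_surjective v
    rw [hφ, hφ, ← QuotientAddGroup.mk_sub, ← QuotientAddGroup.mk_sub]
    exact hE b a

theorem rigid_core (D : Coord A X ι) (hcl : Closed A X) {G : ι → ι → A → Fin 4} (hG : Sys D.K G)
    {f : ι → A → A} (hf : Fam D.K G f)
    (hsign : ∀ i, (∃ t, ∀ a, f i a - (a + t) ∈ D.K i) ∨ (∃ t, ∀ a, f i a - (-a + t) ∈ D.K i))
    (hT : ∀ i j, i ≠ j → ∀ t, (∀ a, G i j (a + t) = G i j a) → t ∈ D.K i ⊔ D.K j)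
    (M : ι → ι → Prop) (hMs : ∀ i j, M i j → M j i)
    (hM : ∀ i j, M i j → i ≠ j ∧ ¬ ∃ t, ∀ a, G i j (-a + t) = G i j a)
    (hR : ∀ i j, i ≠ j → (¬ ∀ a, a + a ∈ D.K i ⊔ D.K j) → ∃ k, M i k ∨ M j k)
    (σ : Equiv.Perm X) (hσ : ∀ i a, σ (D.pt i a) = D.pt i (f i a)) :
    ∃ g : A, ∀ x, g +ᵥ x = σ x := by
  -- formulas with signs
  have plusplus : ∀ i j ti tj, (∀ a, f i a - (a + ti) ∈ D.K i) → (∀ a, f j a - (a + tj) ∈ D.K j) →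
      ∀ a, G i j (a + (tj - ti)) = G i j a := by
    intro i j ti tj h1 h2 a
    rw [← sub_zero a, ← hf.pres i j 0 a]
    symm
    apply hG.congrL
    have : f j a - f i 0 - (a - 0 + (tj - ti)) = (f j a - (a + tj)) - (f i 0 - (0 + ti)) := by abel
    rw [this]
    exact sub_mem (AddSubgroup.mem_sup_right (h2 a)) (AddSubgroup.mem_sup_left (h1 0))
  have minusminus : ∀ i j ti tj, (∀ a, f i a - (-a + ti) ∈ D.K i) →
      (∀ a, f j a - (-a + tj) ∈ D.K j) → ∀ a, G i j (-a + (tj - ti)) = G i j a := by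
    intro i j ti tj h1 h2 a
    conv_rhs => rw [← sub_zero a, ← hf.pres i j 0 a]
    symm
    apply hG.congrL
    have : f j a - f i 0 - (-a + (tj - ti)) = (f j a - (-a + tj)) - (f i 0 - (-0 + ti)) := by
      rw [neg_zero]; abel
    rw [this]
    exact sub_mem (AddSubgroup.mem_sup_right (h2 a)) (AddSubgroup.mem_sup_left (h1 0))
  have plusminus : ∀ i j ti tj, (∀ a, f i a - (a + ti) ∈ D.K i) →
      (∀ a, f j a - (-a + tj) ∈ D.K j) → ∀ u a, G i j (-a + (tj - ti) - (u + u)) = G i j a := by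
    intro i j ti tj h1 h2 u a
    have e : G i j a = G i j ((u + a) - u) := by rw [add_sub_cancel_left]
    rw [e, ← hf.pres i j u (u + a)]
    symm
    apply hG.congrL
    have : f j (u + a) - f i u - (-a + (tj - ti) - (u + u)) =
      (f j (u + a) - (-(u + a) + tj)) - (f i u - (u + ti)) := by abel
    rw [this]
    exact sub_mem (AddSubgroup.mem_sup_right (h2 _)) (AddSubgroup.mem_sup_left (h1 _))
  -- reflecting relation symmetric
  have hrefl : ∀ i j, (∃ t, ∀ a, G i j (-a + t) = G i j a) → ∃ t, ∀ a, G j i (-a + t) = G j i a := by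
    rintro i j ⟨t, ht⟩
    refine ⟨-t, fun a => ?_⟩
    rw [← hG.symm j i a, ← ht (-a), ← hG.symm j i]
    congr 1; abel
  have minus_any : ∀ i ti, (∀ a, f i a - (-a + ti) ∈ D.K i) → ∀ j,
      ∃ t, ∀ a, G i j (-a + t) = G i j a := by
    intro i ti h1 j
    rcases hsign j with ⟨tj, h2⟩ | ⟨tj, h2⟩
    · apply hrefl
      refine ⟨ti - tj, fun a => ?_⟩
      have := plusminus j i tj ti h2 h1 0 a
      simpa using this
    · exact ⟨_, minusminus i j ti tj h1 h2⟩
  have no_minus : ∀ i ti, (∀ a, f i a - (-a + ti) ∈ D.K i) → ∀ j, ¬ M i j :=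
    fun i ti h1 j hj => (hM i j hj).2 (minus_any i ti h1 j)
  have pm : ∀ i j, i ≠ j → ∀ ti tj, (∀ a, f i a - (a + ti) ∈ D.K i) →
      (∀ a, f j a - (-a + tj) ∈ D.K j) → ∀ a b, (f j b - b) - (f i a - a) ∈ D.K i ⊔ D.K j := by
    intro i j hij ti tj h1 h2 a b
    have p := plusminus i j ti tj h1 h2
    have el : ∀ u, u + u ∈ D.K i ⊔ D.K j := by
      intro u
      rw [← neg_mem_iff]
      apply hT i j hij
      intro a
      have e1 := p u (-a + (tj - ti))
      have e2 := p 0 (-a + (tj - ti))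
      have : -(-a + (tj - ti)) + (tj - ti) = a := by abel
      rw [this] at e1 e2
      rw [← sub_eq_add_neg, e1, ← e2]; simp
    have ht : tj - ti ∈ D.K i ⊔ D.K j := by
      apply hT i j hij
      intro a
      rw [← p 0 a]
      apply hG.congrL
      have : a + (tj - ti) - (-a + (tj - ti) - (0 + 0)) = a + a := by rw [add_zero]; abel
      rw [this]; exact el a
    have : (f j b - b) - (f i a - a) = (f j b - (-b + tj)) - (f i a - (a + ti)) + (tj - ti) - (b + b) := by
      abel
    rw [this]
    exact sub_mem (add_mem (sub_mem (AddSubgroup.mem_sup_right (h2 _))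
      (AddSubgroup.mem_sup_left (h1 _))) ht) (el b)
  have cross : ∀ i j, i ≠ j → ∀ a b, (f j b - b) - (f i a - a) ∈ D.K i ⊔ D.K j := by
    intro i j hij a b
    rcases hsign i with ⟨ti, h1⟩ | ⟨ti, h1⟩ <;> rcases hsign j with ⟨tj, h2⟩ | ⟨tj, h2⟩
    · have ht := hT i j hij _ (plusplus i j ti tj h1 h2)
      have : (f j b - b) - (f i a - a) = (f j b - (b + tj)) - (f i a - (a + ti)) + (tj - ti) := by
        abel
      rw [this]
      exact (add_mem (sub_mem (AddSubgroup.mem_sup_right (h2 _))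
        (AddSubgroup.mem_sup_left (h1 _))) ht)
    · exact pm i j hij ti tj h1 h2 a b
    · have := pm j i hij.symm tj ti h2 h1 b a
      rw [sup_comm, ← neg_mem_iff, neg_sub]; exact this
    · by_cases el : ∀ a, a + a ∈ D.K i ⊔ D.K j
      · have ht : tj - ti ∈ D.K i ⊔ D.K j := by
          apply hT i j hij
          intro a
          rw [← minusminus i j ti tj h1 h2 a]
          apply hG.congrL
          have : a + (tj - ti) - (-a + (tj - ti)) = a + a := by abel
          rw [this]; exact el a
        have : (f j b - b) - (f i a - a) = (f j b - (-b + tj)) - (f i a - (-a + ti)) + (tj - ti) -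
          (b + b) + (a + a) := by abel
        rw [this]
        exact add_mem (sub_mem (add_mem (sub_mem (AddSubgroup.mem_sup_right (h2 _))
          (AddSubgroup.mem_sup_left (h1 _))) ht) (el b)) (el a)
      · obtain ⟨k, hk | hk⟩ := hR i j hij el
        · exact absurd hk (no_minus i ti h1 k)
        · exact absurd hk (no_minus j tj h2 k)
  apply hcl
  · intro x
    obtain ⟨i, a, rfl⟩ := D.surj x
    refine ⟨f i a - a, ?_⟩
    rw [hσ, D.vadd, sub_add_cancel]
  · intro x y
    obtain ⟨i, a, rfl⟩ := D.surj x
    obtain ⟨j, b, rfl⟩ := D.surj y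
    simp only [hσ, D.vadd, D.eq_iff]
    by_cases hij : i = j
    · subst hij
      rcases hsign i with ⟨t, h⟩ | ⟨t, h⟩
      · refine ⟨t, Or.inl ⟨⟨trivial, ?_⟩, trivial, ?_⟩⟩
        · rw [add_comm]; exact h a
        · rw [add_comm]; exact h b
      · refine ⟨t - a - b, Or.inr ⟨⟨rfl, ?_⟩, rfl, ?_⟩⟩
        · have := h b
          convert this using 1; abel
        · have := h a
          convert this using 1; abel
    · obtain ⟨y, hy, z, hz, hyz⟩ := AddSubgroup.mem_sup.1 (cross i j hij a b)
      refine ⟨f i a - a + y, Or.inl ⟨⟨trivial, ?_⟩, trivial, ?_⟩⟩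
      · have : f i a - (f i a - a + y + a) = -y := by abel
        rw [this]; exact neg_mem hy
      · have : f j b - (f i a - a + y + b) = (f j b - b) - (f i a - a) - y := by abel
        rw [this, ← hyz]
        simpa using hz

end
end GRab

namespace GRab

theorem exists_matching {ι : Type*} [Finite ι] (R : ι → ι → Prop) (hs : ∀ i j, R i j → R j i)
    (hirr : ∀ i, ¬ R i i) :
    ∃ M : ι → ι → Prop, (∀ i j, M i j → R i j) ∧ (∀ i j, M i j → M j i) ∧
      (∀ i j k, M i j → M i k → j = k) ∧ ∀ i j, R i j → ∃ k, M i k ∨ M j k := by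
  let Q : Set (ι → ι → Prop) := {M | (∀ i j, M i j → R i j) ∧ (∀ i j, M i j → M j i) ∧
      (∀ i j k, M i j → M i k → j = k)}
  have hne : Q.Nonempty := ⟨fun _ _ => False, by simp [Q]⟩
  obtain ⟨M, hM⟩ := Set.Finite.exists_maximal (Set.toFinite Q) hne
  obtain ⟨h1, h2, h3⟩ := hM.1
  refine ⟨M, h1, h2, h3, fun i j hij => ?_⟩
  by_contra hcon
  push Not at hcon
  have hne : i ≠ j := fun h => hirr j (h ▸ hij)
  have hM' : (fun a b => M a b ∨ (a = i ∧ b = j) ∨ (a = j ∧ b = i)) ∈ Q := by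
    refine ⟨?_, ?_, ?_⟩
    · rintro a b (h | ⟨rfl, rfl⟩ | ⟨rfl, rfl⟩)
      · exact h1 _ _ h
      · exact hij
      · exact hs _ _ hij
    · rintro a b (h | ⟨rfl, rfl⟩ | ⟨rfl, rfl⟩)
      · exact Or.inl (h2 _ _ h)
      · exact Or.inr (Or.inr ⟨rfl, rfl⟩)
      · exact Or.inr (Or.inl ⟨rfl, rfl⟩)
    · rintro a b c (h | ⟨rfl, rfl⟩ | ⟨rfl, rfl⟩) (h' | ⟨e, rfl⟩ | ⟨e, rfl⟩)
      · exact h3 _ _ _ h h'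
      · subst e; exact absurd h (hcon b).1
      · subst e; exact absurd h (hcon b).2
      · exact absurd h' (hcon c).1
      · rfl
      · exact absurd e hne
      · exact absurd h' (hcon c).2
      · exact absurd e hne.symm
      · rfl
  have hle : M ≤ (fun a b => M a b ∨ (a = i ∧ b = j) ∨ (a = j ∧ b = i)) :=
    fun a b h => Or.inl h
  have := hM.2 hM' hle i j (Or.inr (Or.inl ⟨rfl, rfl⟩))
  exact (hcon j).1 this

section
variable {A : Type*} [AddCommGroup A]

open Classical in
/-- The basic pattern between two orbits. -/
noncomputable def pat (L : AddSubgroup A) (br : Prop) (d a : A) : Fin 3 :=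
  if L = ⊤ then 0 else if a ∈ L then 1 else if br ∧ a - d ∈ L then 2 else 0

theorem pat_neg (L : AddSubgroup A) (br : Prop) (d a : A) : pat L br (-d) (-a) = pat L br d a := by
  unfold pat
  have h1 : -a - -d = -(a - d) := by abel
  rw [h1]
  have e1 : -a ∈ L ↔ a ∈ L := neg_mem_iff
  have e2 : -(a - d) ∈ L ↔ a - d ∈ L := neg_mem_iff
  generalize a - d = b at *
  by_cases w : br <;> by_cases p : a ∈ L <;> by_cases q : b ∈ L <;> simp [w, p, q, e1, e2]

theorem pat_per (L : AddSubgroup A) (br : Prop) (d a k : A) (hk : k ∈ L) :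
    pat L br d (a + k) = pat L br d a := by
  unfold pat
  have h1 : a + k - d = a - d + k := by abel
  rw [h1]
  have e1 : a + k ∈ L ↔ a ∈ L := add_mem_cancel_right hk
  have e2 : a - d + k ∈ L ↔ a - d ∈ L := add_mem_cancel_right hk
  generalize a - d = b at *
  by_cases w : br <;> by_cases p : a ∈ L <;> by_cases q : b ∈ L <;> simp [w, p, q, e1, e2]

theorem pat_one {L : AddSubgroup A} {br : Prop} {d : A} (hL : L ≠ ⊤) (a : A) :
    pat L br d a = 1 ↔ a ∈ L := by
  unfold pat
  rw [if_neg hL]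
  split_ifs <;> simp_all

theorem pat_two {L : AddSubgroup A} {br : Prop} {d : A} (hL : L ≠ ⊤) (hb : br) (hd : d ∉ L) (a : A) :
    pat L br d a = 2 ↔ a - d ∈ L := by
  unfold pat
  rw [if_neg hL]
  by_cases h : a ∈ L
  · have : a - d ∉ L := by
      intro h'; apply hd
      have := sub_mem h h'
      simpa using this
    simp [h, this]
  · simp [h, hb]

theorem pat_two' {L : AddSubgroup A} {br : Prop} {d : A} (hb : ¬ br) (a : A) :
    pat L br d a ≠ 2 := by
  unfold pat
  split_ifs <;> simp_all

theorem pat_sum [Finite A] (P : A → Fin 3) :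
    {a | P a = 0}.ncard + {a | P a = 1}.ncard + {a | P a = 2}.ncard = Nat.card A := by
  have := Fintype.ofFinite A
  have h := Finset.card_eq_sum_card_fiberwise (s := (Finset.univ : Finset A)) (t := Finset.univ)
    (f := P) (by intro x _; simp)
  rw [Fin.sum_univ_three] at h
  have key : ∀ k, {a | P a = k}.ncard = (Finset.univ.filter (fun a => P a = k)).card := by
    intro k
    rw [← Set.ncard_coe_finset]; congr 1; ext; simp
  rw [key, key, key, ← h, Nat.card_eq_fintype_card, Finset.card_univ]

theorem pat_c1 {L : AddSubgroup A} {br : Prop} {d : A} (hL : L ≠ ⊤) :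
    {a | pat L br d a = 1}.ncard = Nat.card L := by
  have : {a | pat L br d a = 1} = (L : Set A) := by ext a; exact pat_one hL a
  rw [this]; rfl

theorem pat_c2 {L : AddSubgroup A} {br : Prop} {d : A} (hL : L ≠ ⊤) (hb : br) (hd : d ∉ L) :
    {a | pat L br d a = 2}.ncard = Nat.card L := by
  have : {a | pat L br d a = 2} = (fun a => a + d) '' (L : Set A) := by
    ext a
    change pat L br d a = 2 ↔ _
    rw [pat_two hL hb hd]
    constructor
    · intro h; exact ⟨a - d, h, by simp⟩
    · rintro ⟨b, hb, rfl⟩; simpa using hb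
  rw [this, Set.ncard_image_of_injective _ (add_left_injective d)]; rfl

theorem pat_cnt [Finite A] {L : AddSubgroup A} {br : Prop} {d : A} (hb : br → 4 ≤ L.index)
    (hd : L ≠ ⊤ → d ∉ L) :
    {a | pat L br d a = 1}.ncard ≤ {a | pat L br d a = 0}.ncard ∧
    {a | pat L br d a = 2}.ncard < {a | pat L br d a = 0}.ncard := by
  have hs := pat_sum (pat L br d)
  have hpos : 0 < Nat.card L := Nat.card_pos
  have hposA : 0 < Nat.card A := Nat.card_pos
  by_cases hL : L = ⊤
  · have h1 : {a | pat L br d a = 1} = ∅ := by ext a; simp [pat, hL]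
    have h2 : {a | pat L br d a = 2} = ∅ := by ext a; simp [pat, hL]
    rw [h1, h2, Set.ncard_empty] at hs ⊢
    omega
  have hc1 := pat_c1 (br := br) (d := d) hL
  have hmul := L.card_mul_index
  have hidx : L.index ≠ 1 := fun h => hL (AddSubgroup.index_eq_one.1 h)
  have hidx0 : L.index ≠ 0 := by intro h; rw [h] at hmul; omega
  by_cases h : br
  · have hc2 := pat_c2 hL h (hd hL)
    have := hb h
    have := Nat.mul_le_mul_left (Nat.card L) this
    omega
  · have h2 : {a | pat L br d a = 2} = ∅ := by
      ext a; simpa using pat_two' h a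
    rw [h2, Set.ncard_empty] at hs ⊢
    have : 2 ≤ L.index := by omega
    have := Nat.mul_le_mul_left (Nat.card L) this
    omega

theorem pat_cnt_star [Finite A] {L : AddSubgroup A} {br : Prop} {d : A} (hb : br) (hi : L.index = 3)
    (hd : d ∉ L) (k : Fin 3) : {a | pat L br d a = k}.ncard = Nat.card L := by
  have hs := pat_sum (pat L br d)
  have hL : L ≠ ⊤ := by rintro rfl; simp at hi
  have hc1 := pat_c1 (br := br) (d := d) hL
  have hc2 := pat_c2 hL hb hd
  have hmul := L.card_mul_index
  rw [hi] at hmul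
  fin_cases k
  · change {a | pat L br d a = 0}.ncard = _
    omega
  · exact hc1
  · exact hc2

theorem exists_d (L : AddSubgroup A) :
    ∃ d : A, (L ≠ ⊤ → d ∉ L) ∧ ((¬ ∀ a, a + a ∈ L) → d + d ∉ L) := by
  by_cases h : ∀ a, a + a ∈ L
  · by_cases hL : L = ⊤
    · exact ⟨0, fun h => absurd hL h, fun h' => absurd h h'⟩
    · have : ∃ d, d ∉ L := by
        by_contra hcon; push Not at hcon
        exact hL (by ext x; simp [hcon x])
      obtain ⟨d, hd⟩ := this
      exact ⟨d, fun _ => hd, fun h' => absurd h h'⟩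
  · have h0 := h
    push Not at h0
    obtain ⟨d, hd⟩ := h0
    exact ⟨d, fun _ h => hd (add_mem h h), fun _ => hd⟩

theorem el_of_index {L : AddSubgroup A} [Finite A] (h : L.index < 3) (a : A) : a + a ∈ L := by
  have h0 : L.index ≠ 0 := AddSubgroup.index_ne_zero_of_finite
  rcases (by omega : L.index = 1 ∨ L.index = 2) with h | h
  · rw [AddSubgroup.index_eq_one.1 h]; trivial
  · exact AddSubgroup.add_self_mem_of_index_two h a

open Classical in
theorem exists_F {ι : Type*} [Finite ι] [Finite A] (K : ι → AddSubgroup A) :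
    ∃ (M : ι → ι → Prop) (F : ι → ι → A → Fin 3),
      (∀ i j a, i ≠ j → F j i (-a) = F i j a) ∧
      (∀ i j a k, k ∈ K i → F i j (a + k) = F i j a) ∧
      (∀ i j, i ≠ j → ∀ t, (∀ a, F i j (a + t) = F i j a) → t ∈ K i ⊔ K j) ∧
      (∀ i j, M i j → M j i) ∧
      (∀ i j, M i j → i ≠ j ∧ ¬ ∃ t, ∀ a, F i j (-a + t) = F i j a) ∧
      (∀ i j, i ≠ j → (¬ ∀ a, a + a ∈ K i ⊔ K j) → ∃ k, M i k ∨ M j k) ∧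
      (∀ i j, 4 ≤ (K i ⊔ K j).index → ∃ d u v, d ∉ K i ⊔ K j ∧
        (∀ a, F i j a = u ↔ a ∈ K i ⊔ K j) ∧ (∀ a, F i j a = v ↔ a - d ∈ K i ⊔ K j)) ∧
      (3 ≤ Nat.card ι → ∀ π : Equiv.Perm ι, (∀ i j, i ≠ j → ∀ c : Fin 3,
        {a | F (π i) (π j) a = c}.ncard = {a | F i j a = c}.ncard) → ∀ i, π i = i) := by
  have := Fintype.ofFinite ι
  let o := Fintype.equivFin ι
  choose d hd hd2 using exists_d (A := A)
  let L : ι → ι → AddSubgroup A := fun i j => K i ⊔ K j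
  have hLs : ∀ i j, L j i = L i j := fun i j => sup_comm _ _
  obtain ⟨M, hMR, hMs, hMm, hMR'⟩ := exists_matching
    (fun i j => i ≠ j ∧ ¬ ∀ a, a + a ∈ L i j)
    (fun i j h => ⟨h.1.symm, by rw [hLs]; exact h.2⟩) (fun i h => h.1 rfl)
  let star : ι → ι → Prop := fun i j => M i j ∧ (L i j).index = 3
  have hss : ∀ i j, star i j → star j i := fun i j h => ⟨hMs _ _ h.1, by rw [hLs]; exact h.2⟩
  have hlab : ∃ l : ι → ι → Fin 3, (∀ i j, l i j = l j i) ∧ (3 ≤ Nat.card ι → ∀ π : Equiv.Perm ι,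
      (∀ i j, star (π i) (π j) ↔ star i j) →
      (∀ i j, i ≠ j → ¬ star i j → l (π i) (π j) = l i j) → ∀ i, π i = i) := by
    by_cases h3 : 3 ≤ Nat.card ι
    · obtain ⟨l, hl, h⟩ := label_lemma star hss (fun i j k h h' => hMm i j k h.1 h'.1) h3
      exact ⟨l, hl, fun _ => h⟩
    · exact ⟨fun _ _ => 0, fun _ _ => rfl, fun h => absurd h h3⟩
  obtain ⟨l, hl, hlab⟩ := hlab
  let br : ι → ι → Prop := fun i j => 4 ≤ (L i j).index ∨ star i j
  have hbs : ∀ i j, br j i = br i j := by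
    intro i j
    apply propext
    simp only [br, hLs i j]
    exact or_congr Iff.rfl ⟨hss _ _, hss _ _⟩
  let dd : ι → ι → A := fun i j => if o i < o j then d (L i j) else - d (L i j)
  have hdd : ∀ i j, i ≠ j → dd j i = - dd i j := by
    intro i j hij
    simp only [dd, hLs i j]
    rcases lt_trichotomy (o i) (o j) with h | h | h
    · rw [if_neg (not_lt.2 h.le), if_pos h]
    · exact absurd (o.injective h) hij
    · rw [if_pos h, if_neg (not_lt.2 h.le), neg_neg]
  have hdd1 : ∀ i j, L i j ≠ ⊤ → dd i j ∉ L i j := by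
    intro i j h
    simp only [dd]
    split_ifs
    · exact hd _ h
    · rw [neg_mem_iff]; exact hd _ h
  have hdd2 : ∀ i j, (¬ ∀ a, a + a ∈ L i j) → dd i j + dd i j ∉ L i j := by
    intro i j h
    simp only [dd]
    split_ifs
    · exact hd2 _ h
    · rw [← neg_add, neg_mem_iff]; exact hd2 _ h
  let P : ι → ι → A → Fin 3 := fun i j a => pat (L i j) (br i j) (dd i j) a
  have hPF : ∀ i j a b, P i j a + l i j = P i j b + l i j ↔ P i j a = P i j b :=
    fun i j a b => add_left_inj _
  have top4 : ∀ i j, 3 ≤ (L i j).index → L i j ≠ ⊤ := by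
    intro i j h h'; rw [h'] at h; simp at h
  refine ⟨M, fun i j a => P i j a + l i j, ?_, ?_, ?_, hMs, ?_, ?_, ?_, ?_⟩
  · intro i j a hij
    change P j i (-a) + l j i = P i j a + l i j
    rw [hl j i]
    congr 1
    simp only [P]
    rw [hdd i j hij, hLs, hbs, pat_neg]
  · intro i j a k hk
    simp only [P]
    rw [pat_per _ _ _ _ _ (AddSubgroup.mem_sup_left hk)]
  · intro i j hij t ht
    by_cases hL : L i j = ⊤
    · have : K i ⊔ K j = ⊤ := hL
      rw [this]; trivial
    · have := ht 0
      simp only [hPF, zero_add] at this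
      change t ∈ L i j
      rw [← pat_one hL t]
      exact this.trans ((pat_one hL 0).2 (zero_mem _))
  · intro i j hij
    have hR := hMR i j hij
    refine ⟨hR.1, ?_⟩
    rintro ⟨t, ht⟩
    simp only [hPF] at ht
    have hidx : 3 ≤ (L i j).index := by
      by_contra h; exact hR.2 (el_of_index (by omega))
    have hL := top4 i j hidx
    have hbr : br i j := by
      rcases Nat.lt_or_ge 3 (L i j).index with h | h
      · exact Or.inl h
      · exact Or.inr ⟨hij, by omega⟩
    have h1 : t ∈ L i j := by
      have := ht 0
      rw [neg_zero, zero_add] at this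
      rw [← pat_one hL t]
      exact this.trans ((pat_one hL 0).2 (zero_mem _))
    have h2 : P i j (dd i j) = 2 := (pat_two hL hbr (hdd1 i j hL) _).2 (by simp)
    have h3 := ht (dd i j)
    rw [h2] at h3
    have h4 := (pat_two hL hbr (hdd1 i j hL) _).1 h3
    apply hdd2 i j hR.2
    have h5 := sub_mem h1 h4
    convert h5 using 1; abel
  · intro i j hij h
    exact hMR' i j ⟨hij, h⟩
  · intro i j h
    have hL := top4 i j (by simp only [L]; omega)
    have hbr : br i j := Or.inl h
    refine ⟨dd i j, 1 + l i j, 2 + l i j, hdd1 i j hL, fun a => ?_, fun a => ?_⟩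
    · rw [add_left_inj]; exact pat_one hL a
    · rw [add_left_inj]; exact pat_two hL hbr (hdd1 i j hL) a
  · intro h3 π hπ
    have hN : ∀ i j c, {a | P i j a + l i j = c}.ncard = {a | P i j a = c - l i j}.ncard := by
      intro i j c
      congr 1; ext a
      exact eq_sub_iff_add_eq.symm
    have hirr : ∀ i j, star i j → i ≠ j := fun i j h => (hMR i j h.1).1
    have hst : ∀ i j, star i j → ∀ c c', {a | P i j a + l i j = c}.ncard = {a | P i j a + l i j = c'}.ncard := by
      intro i j h c c'
      have hL := top4 i j (by rw [h.2])
      rw [hN, hN]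
      simp only [P]
      rw [pat_cnt_star (Or.inr h) h.2 (hdd1 i j hL), pat_cnt_star (Or.inr h) h.2 (hdd1 i j hL)]
    have hns : ∀ i j, ¬ star i j →
        {a | P i j a + l i j = l i j + 1}.ncard ≤ {a | P i j a + l i j = l i j}.ncard ∧
        {a | P i j a + l i j = l i j + 2}.ncard < {a | P i j a + l i j = l i j}.ncard := by
      intro i j h
      have := pat_cnt (L := L i j) (br := br i j) (d := dd i j)
        (fun hb => hb.resolve_right h) (hdd1 i j)
      simp only [hN, add_sub_cancel_left, sub_self]
      exact this
    have hst' : ∀ i j, i ≠ j → (star (π i) (π j) ↔ star i j) := by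
      intro i j hij
      constructor
      · intro h
        by_contra h'
        have a := (hns i j h').2
        rw [← hπ i j hij, ← hπ i j hij, hst _ _ h _ (l i j)] at a
        exact lt_irrefl _ a
      · intro h
        by_contra h'
        have a := (hns _ _ h').2
        rw [hπ i j hij, hπ i j hij, hst _ _ h _ (l (π i) (π j))] at a
        exact lt_irrefl _ a
    refine hlab h3 π ?_ ?_
    · intro i j
      by_cases hij : i = j
      · subst hij
        exact ⟨fun h => absurd rfl (hirr _ _ h), fun h => absurd rfl (hirr _ _ h)⟩
      · exact hst' i j hij
    · intro i j hij h
      have h' : ¬ star (π i) (π j) := fun h' => h ((hst' i j hij).1 h')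
      have a := hns i j h
      have b := hns _ _ h'
      rw [hπ i j hij, hπ i j hij, hπ i j hij] at b
      have fin : ∀ (N : Fin 3 → ℕ) (p q : Fin 3), N (p + 1) ≤ N p ∧ N (p + 2) < N p →
          N (q + 1) ≤ N q ∧ N (q + 2) < N q → q = p := by
        intro N p q a b
        fin_cases p <;> fin_cases q <;> simp at a b ⊢ <;> omega
      exact fin (fun c => {a | P i j a + l i j = c}.ncard) _ _ a b

end
end GRab

namespace GRab

section
variable {A X ι : Type*} [AddCommGroup A] [AddAction A X]

theorem Coord.exists_perm (D : Coord A X ι) (f : ι → A → A)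
    (inj : ∀ i a b, f i b - f i a ∈ D.K i ↔ b - a ∈ D.K i)
    (surj : ∀ i b, ∃ a, b - f i a ∈ D.K i) :
    ∃ σ : Equiv.Perm X, ∀ i a, σ (D.pt i a) = D.pt i (f i a) := by
  choose c r hcr using D.surj
  have key : ∀ i a, D.pt (c (D.pt i a)) (f (c (D.pt i a)) (r (D.pt i a))) = D.pt i (f i a) := by
    intro i a
    have h1 := (D.eq_iff _ _ _ _).1 (hcr (D.pt i a))
    rw [D.eq_iff]
    refine ⟨h1.1, ?_⟩
    generalize r (D.pt i a) = x at *
    rw [h1.1] at *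
    rw [inj]; exact h1.2
  refine ⟨Equiv.ofBijective (fun x => D.pt (c x) (f (c x) (r x))) ⟨?_, ?_⟩, ?_⟩
  · intro x y h
    obtain ⟨i, a, rfl⟩ := D.surj x
    obtain ⟨j, b, rfl⟩ := D.surj y
    simp only [key] at h
    rw [D.eq_iff] at h ⊢
    refine ⟨h.1, ?_⟩
    obtain ⟨rfl, h⟩ := h
    exact (inj _ _ _).1 h
  · intro y
    obtain ⟨j, b, rfl⟩ := D.surj y
    obtain ⟨a, ha⟩ := surj j b
    refine ⟨D.pt j a, ?_⟩
    simp only [key]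
    rw [D.eq_iff]; exact ⟨rfl, ha⟩
  · intro i a
    exact key i a

open Classical in
theorem exc3_nonisolated (D : Coord A X ι) (hcl : Closed A X) (i : ι) (h3 : Exc 3 (A ⧸ D.K i)) :
    ∃ j, j ≠ i ∧ D.K i ⊔ D.K j ≠ ⊤ := by
  by_contra hcon
  push Not at hcon
  obtain ⟨σ, hσ⟩ := D.exists_perm (fun j a => if j = i then -a else a)
    (by
      intro j a b
      by_cases h : j = i
      · simp only [if_pos h]
        rw [← neg_mem_iff]
        have : -(-b - -a) = b - a := by abel
        rw [this]
      · simp only [if_neg h])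
    (by
      intro j b
      by_cases h : j = i
      · exact ⟨-b, by simp [h]⟩
      · exact ⟨b, by simp [h]⟩)
  have hi : ∀ a, σ (D.pt i a) = D.pt i (-a) := fun a => by rw [hσ, if_pos rfl]
  have hj : ∀ j a, j ≠ i → σ (D.pt j a) = D.pt j a := fun j a h => by rw [hσ, if_neg h]
  have mix : ∀ j a b, j ≠ i → ∃ g : A, g +ᵥ D.pt i a = σ (D.pt i a) ∧ g +ᵥ D.pt j b = σ (D.pt j b) := by
    intro j a b h
    have : -(a + a) ∈ D.K i ⊔ D.K j := by rw [hcon j h]; trivial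
    obtain ⟨y, hy, z, hz, hyz⟩ := AddSubgroup.mem_sup.1 this
    refine ⟨z, ?_, ?_⟩
    · rw [hi, D.vadd, D.eq_iff]
      refine ⟨rfl, ?_⟩
      have : -a - (z + a) = -(a + a) - z := by abel
      rw [this, ← hyz]; simpa using hy
    · rw [hj _ _ h, D.vadd, D.eq_iff]
      exact ⟨rfl, by simpa using hz⟩
  obtain ⟨g, hg⟩ := hcl σ (by
      intro x
      obtain ⟨j, a, rfl⟩ := D.surj x
      rw [hσ]
      exact ⟨(if j = i then -a else a) - a, by rw [D.vadd, sub_add_cancel]⟩) (by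
      intro x y
      obtain ⟨j, a, rfl⟩ := D.surj x
      obtain ⟨k, b, rfl⟩ := D.surj y
      by_cases h1 : j = i <;> by_cases h2 : k = i
      · subst h1; subst h2
        refine ⟨-a - b, Or.inr ⟨?_, ?_⟩⟩
        · rw [hi, D.vadd, D.eq_iff]; exact ⟨rfl, by abel_nf; exact zero_mem _⟩
        · rw [hi, D.vadd, D.eq_iff]; exact ⟨rfl, by abel_nf; exact zero_mem _⟩
      · subst h1
        obtain ⟨g, hg⟩ := mix k a b h2
        exact ⟨g, Or.inl hg⟩
      · subst h2
        obtain ⟨g, hg⟩ := mix j b a h1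
        exact ⟨g, Or.inl ⟨hg.2, hg.1⟩⟩
      · exact ⟨0, Or.inl ⟨by rw [hj _ _ h1, zero_vadd], by rw [hj _ _ h2, zero_vadd]⟩⟩)
  have h2 : ∀ a, - a - (g + a) ∈ D.K i := by
    intro a
    have := hg (D.pt i a)
    rw [hi, D.vadd, D.eq_iff] at this
    exact this.2
  have h4 : ∀ a : A, a ∈ D.K i := by
    intro a
    have e1 := h2 a
    have e2 := h2 0
    have e3 : 3 • a ∈ D.K i := by
      rw [← QuotientAddGroup.eq_zero_iff, QuotientAddGroup.mk_nsmul]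
      exact h3.smul _
    have : a = 3 • a + (- a - (g + a)) - (- 0 - (g + 0)) := by
      rw [neg_zero, add_zero]; abel
    rw [this]
    exact sub_mem (add_mem e3 e1) e2
  have hK : D.K i = ⊤ := by ext a; simp [h4 a]
  have hc := h3.card
  have : Nat.card (A ⧸ D.K i) = (D.K i).index := rfl
  rw [this, hK] at hc
  simp at hc

theorem exc_sub {p : ℕ} (hp : p = 2 ∨ p = 3) {B : Type*} [AddCommGroup B] (hB : Exc p B)
    (H : AddSubgroup B) (hH : H ≠ ⊤) (h : B) (hh : h ∈ H) (h0 : h ≠ 0) (x : B) (hx : x ∈ H) :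
    x = 0 ∨ PM h x := by
  have hpp : p.Prime := by rcases hp with rfl | rfl <;> norm_num
  have : Fact p.Prime := ⟨hpp⟩
  have hc := hB.card
  have : Finite B := Nat.finite_of_card_ne_zero (by rw [hc]; exact pow_ne_zero _ hpp.ne_zero)
  have hcH : Nat.card H = p := by
    have hdvd := AddSubgroup.card_addSubgroup_dvd_card H
    rw [hc, Nat.dvd_prime_pow hpp] at hdvd
    obtain ⟨k, hk, hk'⟩ := hdvd
    interval_cases k
    · rw [pow_zero, AddSubgroup.card_eq_one] at hk'
      rw [hk'] at hh
      exact absurd hh h0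
    · simpa using hk'
    · exact absurd (AddSubgroup.eq_top_of_card_eq H (by rw [hk', hc])) hH
  have hz : (⟨x, hx⟩ : H) ∈ AddSubgroup.zmultiples (⟨h, hh⟩ : H) :=
    mem_zmultiples_of_prime_card hcH (by simpa using h0)
  have hfin : IsOfFinAddOrder (⟨h, hh⟩ : H) := isOfFinAddOrder_of_finite _
  obtain ⟨m, hm⟩ := AddSubgroup.mem_zmultiples_iff.1 hz
  have hm' : m • h = x := congrArg Subtype.val hm
  have hs := hB.smul h
  have hmod : x = (m % p) • h := by
    rw [← hm']
    conv_lhs => rw [← Int.mul_ediv_add_emod m p]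
    rw [add_zsmul, mul_comm, mul_zsmul, natCast_zsmul, hs, zsmul_zero, zero_add]
  have hlt := Int.emod_lt_of_pos m (by exact_mod_cast hpp.pos : (0 : ℤ) < p)
  have hge := Int.emod_nonneg m (by exact_mod_cast hpp.ne_zero : (p : ℤ) ≠ 0)
  generalize m % (p : ℤ) = q at *
  have : q = 0 ∨ q = 1 ∨ (q = 2 ∧ p = 3) := by
    rcases hp with rfl | rfl <;> push_cast at hlt <;> omega
  rcases this with rfl | rfl | ⟨rfl, rfl⟩
  · left; simpa using hmod
  · right; left; simpa using hmod
  · right; right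
    rw [hmod, eq_neg_iff_add_eq_zero, ← hs]
    abel

theorem exists_int [Finite A] (K : ι → AddSubgroup A) (G : ι → ι → A → Fin 4) (hG : Sys K G)
    (hT : ∀ i j, i ≠ j → ∀ t, (∀ a, G i j (a + t) = G i j a) → t ∈ K i ⊔ K j)
    (hQ : ∀ i j, i ≠ j → 4 ≤ (K i ⊔ K j).index → ∃ d u v, d ∉ K i ⊔ K j ∧
        (∀ a, G i j a = u ↔ a ∈ K i ⊔ K j) ∧ (∀ a, G i j a = v ↔ a - d ∈ K i ⊔ K j))
    (i : ι) (hexc : Exc 2 (A ⧸ K i) ∨ Exc 3 (A ⧸ K i) → ∃ j, j ≠ i ∧ K i ⊔ K j ≠ ⊤) :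
    ∃ (E : A ⧸ K i → Prop) (c : A ⧸ K i → Fin 4), IntCol (A ⧸ K i) E c ∧
      ∀ f, Fam K G f →
        ∀ a b : A, E ((b - a : A) : A ⧸ K i) → E ((f i b - f i a : A) : A ⧸ K i) := by
  by_cases hE : Exc 2 (A ⧸ K i) ∨ Exc 3 (A ⧸ K i)
  swap
  · rw [not_or] at hE
    obtain ⟨c, hc⟩ := int1 _ hE.1 hE.2
    exact ⟨_, c, hc, fun _ _ _ _ _ => trivial⟩
  obtain ⟨j, hji, hL⟩ := hexc hE
  obtain ⟨p, hp, hE⟩ : ∃ p, (p = 2 ∨ p = 3) ∧ Exc p (A ⧸ K i) := by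
    rcases hE with h | h
    · exact ⟨2, Or.inl rfl, h⟩
    · exact ⟨3, Or.inr rfl, h⟩
  have : NeZero p := ⟨by omega⟩
  have hcard : (K i).index = p ^ 2 := hE.card
  have mkPM : ∀ h a : A, PM (h : A ⧸ K i) (a : A ⧸ K i) ↔ a - h ∈ K i ∨ a + h ∈ K i := by
    intro h a
    unfold PM
    rw [← QuotientAddGroup.mk_neg, eq_comm, QuotientAddGroup.eq, neg_add_eq_sub,
      eq_comm, QuotientAddGroup.eq, neg_neg, add_comm h a]
  by_cases hLK : K i ⊔ K j = K i
  · obtain ⟨d, u, v, hd, hu, hv⟩ := hQ i j hji.symm (by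
      rw [hLK, hcard]; rcases hp with rfl | rfl <;> norm_num)
    rw [hLK] at hd hu hv
    obtain ⟨c, hc⟩ := int2 p hp _ hE (d : A ⧸ K i) (by
      rw [Ne, QuotientAddGroup.eq_zero_iff]; exact hd)
    refine ⟨_, c, hc, fun f hf a b hab => ?_⟩
    rw [mkPM] at hab ⊢
    rcases hab with h | h
    · left
      have h1 : f j b - f i b ∈ K i := by
        rw [← hu, hf.pres, hu, sub_self]; exact zero_mem _
      have h2 : f j b - f i a - d ∈ K i := by
        rw [← hv, hf.pres, hv]; exact h
      have := sub_mem h2 h1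
      convert this using 1; abel
    · right
      have h1 : f j a - f i a ∈ K i := by
        rw [← hu, hf.pres, hu, sub_self]; exact zero_mem _
      have h2 : f j a - f i b - d ∈ K i := by
        rw [← hv, hf.pres, hv, ← neg_mem_iff]
        convert h using 1; abel
      have := sub_mem h1 h2
      convert this using 1; abel
  · obtain ⟨h', hh', hh''⟩ : ∃ h' ∈ K i ⊔ K j, h' ∉ K i := by
      by_contra hcon
      push Not at hcon
      exact hLK (le_antisymm hcon le_sup_left)
    have hne : (h' : A ⧸ K i) ≠ 0 := by
      rw [Ne, QuotientAddGroup.eq_zero_iff]; exact hh''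
    obtain ⟨c, hc⟩ := int2 p hp _ hE (h' : A ⧸ K i) hne
    refine ⟨_, c, hc, fun f hf a b hab => ?_⟩
    have hL1 : b - a ∈ K i ⊔ K j := by
      rw [mkPM] at hab
      rcases hab with h | h
      · have := add_mem (AddSubgroup.mem_sup_left h) hh'
        rwa [sub_add_cancel] at this
      · have := sub_mem (AddSubgroup.mem_sup_left h) hh'
        rwa [add_sub_cancel_right] at this
    have hK1 : b - a ∉ K i := by
      intro h
      rw [(QuotientAddGroup.eq_zero_iff _).2 h] at hab
      rcases hab with h | h
      · exact hne h.symm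
      · exact hne (by simpa using h.symm)
    have hK2 : f i b - f i a ∉ K i := fun h => hK1 ((hf.inj _ _ _).1 h)
    have hL2 : f i b - f i a ∈ K i ⊔ K j := by
      apply hT i j hji.symm
      intro x
      obtain ⟨z, hz⟩ := hf.surj j (x + f i b)
      have e1 : G i j (x + (f i b - f i a)) = G i j (f j z - f i a) := by
        apply hG.congrL
        apply AddSubgroup.mem_sup_right
        convert hz using 1; abel
      have e2 : G i j x = G i j (f j z - f i b) := by
        apply hG.congrL
        apply AddSubgroup.mem_sup_right
        convert hz using 1; abel
      rw [e1, e2, hf.pres, hf.pres]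
      apply hG.congrL
      convert hL1 using 1; abel
    have hmapmem : ∀ x ∈ K i ⊔ K j, (x : A ⧸ K i) ∈ (K i ⊔ K j).map (QuotientAddGroup.mk' (K i)) :=
      fun x hx => ⟨x, hx, rfl⟩
    have hmapne : (K i ⊔ K j).map (QuotientAddGroup.mk' (K i)) ≠ ⊤ := by
      intro h
      apply hL
      rw [eq_top_iff]
      intro x _
      have : (x : A ⧸ K i) ∈ (K i ⊔ K j).map (QuotientAddGroup.mk' (K i)) := by rw [h]; trivial
      obtain ⟨y, hy, hyx⟩ := this
      have hyx' : (y : A ⧸ K i) = x := hyx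
      rw [QuotientAddGroup.eq] at hyx'
      have := add_mem hy (AddSubgroup.mem_sup_left hyx' : -y + x ∈ K i ⊔ K j)
      rwa [add_neg_cancel_left] at this
    rcases exc_sub hp hE _ hmapne _ (hmapmem _ hh') hne _ (hmapmem _ hL2) with h | h
    · exact absurd ((QuotientAddGroup.eq_zero_iff _).1 h) hK2
    · exact h

end
end GRab

namespace GRab

section
variable {A X ι : Type*} [AddCommGroup A] [AddAction A X]

theorem Coord.fam_of_perm (D : Coord A X ι) {G : ι → ι → A → Fin 4} {γ : Sym2 X → Fin 4}
    (hγ : ∀ i j a b, γ s(D.pt i a, D.pt j b) = G i j (b - a)) (σ : Equiv.Perm X)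
    (hσ : ∀ x y, γ s(σ x, σ y) = γ s(x, y)) {f : ι → A → A}
    (hf : ∀ i a, σ (D.pt i a) = D.pt i (f i a)) : Fam D.K G f where
  inj i a b := by
    have h1 := D.eq_iff i i a b
    have h2 := D.eq_iff i i (f i a) (f i b)
    rw [← hf, ← hf, σ.injective.eq_iff] at h2
    simp only [true_and] at h1 h2
    rw [← h1, ← h2]
  surj i b := by
    obtain ⟨x, hx⟩ := σ.surjective (D.pt i b)
    obtain ⟨j, a, rfl⟩ := D.surj x
    rw [hf, D.eq_iff] at hx
    obtain ⟨rfl, hx⟩ := hx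
    exact ⟨a, hx⟩
  pres i j a b := by
    rw [← hγ, ← hγ, ← hf, ← hf, hσ]

open Classical in
theorem build [Finite ι] [Finite A] (D : Coord A X ι) (hcl : Closed A X)
    (hiso : ∀ i, Exc 2 (A ⧸ D.K i) → ∃ j, j ≠ i ∧ D.K i ⊔ D.K j ≠ ⊤) :
    ∃ (F : ι → ι → A → Fin 3) (E : ∀ i, A ⧸ D.K i → Prop) (c : ∀ i, A ⧸ D.K i → Fin 4),
      (∀ i, IntCol (A ⧸ D.K i) (E i) (c i)) ∧
      (3 ≤ Nat.card ι → ∀ π : Equiv.Perm ι, (∀ i j, i ≠ j → ∀ c : Fin 3,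
        {a | F (π i) (π j) a = c}.ncard = {a | F i j a = c}.ncard) → ∀ i, π i = i) ∧
      ∀ s : ι → Equiv.Perm (Fin 4), ∃ γ : Sym2 X → Fin 4,
        (∀ i a b, γ s(D.pt i a, D.pt i b) = s i (c i ((b - a : A) : A ⧸ D.K i))) ∧
        (∀ i j a b, i ≠ j → γ s(D.pt i a, D.pt j b) = (F i j (b - a)).castSucc) ∧
        ∀ σ : Equiv.Perm X, (∀ x y, γ s(σ x, σ y) = γ s(x, y)) →
          (∀ i a, ∃ b, σ (D.pt i a) = D.pt i b) → ∃ g : A, ∀ x, g +ᵥ x = σ x := by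
  obtain ⟨M, F, h1, h2, h3, h4, h5, h6, h7, h8⟩ := exists_F D.K
  have cs : ∀ a b : Fin 3, a.castSucc = b.castSucc ↔ a = b := fun a b => Fin.castSucc_inj
  obtain ⟨G0, hG0⟩ : ∃ G0 : ι → ι → A → Fin 4, ∀ i j a,
      G0 i j a = if i = j then 0 else (F i j a).castSucc := ⟨_, fun _ _ _ => rfl⟩
  have hG0' : ∀ i j a, i ≠ j → G0 i j a = (F i j a).castSucc := fun i j a h => by
    rw [hG0, if_neg h]
  have hS0 : Sys D.K G0 := by
    constructor
    · intro i j a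
      by_cases h : i = j
      · rw [hG0, hG0, if_pos h, if_pos h.symm]
      · rw [hG0' _ _ _ h, hG0' _ _ _ (Ne.symm h), h1 _ _ _ h]
    · intro i j a k hk
      by_cases h : i = j
      · rw [hG0, hG0, if_pos h, if_pos h]
      · rw [hG0' _ _ _ h, hG0' _ _ _ h, h2 _ _ _ _ hk]
  have hintc := fun i => exists_int D.K G0 hS0
    (by
      intro i j hij t ht
      simp only [hG0' _ _ _ hij, cs] at ht
      exact h3 i j hij t ht)
    (by
      intro i j hij hi
      obtain ⟨d, u, v, hd, hu, hv⟩ := h7 i j hi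
      refine ⟨d, u.castSucc, v.castSucc, hd, ?_, ?_⟩
      · intro a; rw [hG0' _ _ _ hij, cs, hu]
      · intro a; rw [hG0' _ _ _ hij, cs, hv])
    i (by
      rintro (h | h)
      · exact hiso i h
      · exact exc3_nonisolated D hcl i h)
  choose E c hc hE using hintc
  refine ⟨F, E, c, hc, h8, fun s => ?_⟩
  obtain ⟨G, hG⟩ : ∃ G : ι → ι → A → Fin 4, ∀ i j a,
      G i j a = if i = j then s i (c i (a : A ⧸ D.K i)) else (F i j a).castSucc :=
    ⟨_, fun _ _ _ => rfl⟩
  have hGn : ∀ i j a, i ≠ j → G i j a = (F i j a).castSucc := fun i j a h => by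
    rw [hG, if_neg h]
  have hGd : ∀ i a, G i i a = s i (c i (a : A ⧸ D.K i)) := fun i a => by rw [hG, if_pos rfl]
  have hS : Sys D.K G := by
    constructor
    · intro i j a
      by_cases h : i = j
      · subst h
        rw [hGd, hGd, QuotientAddGroup.mk_neg, (hc i).even]
      · rw [hGn _ _ _ h, hGn _ _ _ (Ne.symm h), h1 _ _ _ h]
    · intro i j a k hk
      by_cases h : i = j
      · subst h
        rw [hGd, hGd, QuotientAddGroup.mk_add, (QuotientAddGroup.eq_zero_iff k).2 hk, add_zero]
      · rw [hGn _ _ _ h, hGn _ _ _ h, h2 _ _ _ _ hk]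
  obtain ⟨γ, hγ⟩ := D.exists_col hS
  refine ⟨γ, fun i a b => by rw [hγ, hGd], fun i j a b h => by rw [hγ, hGn _ _ _ h], ?_⟩
  intro σ hσ hcls
  choose f hf using hcls
  have hfam := D.fam_of_perm hγ σ hσ hf
  have hfam0 : Fam D.K G0 f := by
    refine ⟨hfam.inj, hfam.surj, ?_⟩
    intro i j a b
    by_cases h : i = j
    · rw [hG0, hG0, if_pos h, if_pos h]
    · have := hfam.pres i j a b
      rw [hGn _ _ _ h, hGn _ _ _ h] at this
      rw [hG0' _ _ _ h, hG0' _ _ _ h, this]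
  refine rigid_core D hcl hS hfam ?_ ?_ M h4 ?_ h6 σ hf
  · intro i
    exact hfam.sign i (E i) (c i) (s i) (hc i) (hGd i) (hE i f hfam0)
  · intro i j hij t ht
    simp only [hGn _ _ _ hij, cs] at ht
    exact h3 i j hij t ht
  · intro i j hij
    have := h5 i j hij
    simp only [hGn _ _ _ this.1, cs]
    exact this

theorem fibre_count [Finite A] {Y : Type*} (K : AddSubgroup A) (f : A → Y)
    (hf : ∀ a b, f a = f b ↔ b - a ∈ K) (Q : Y → Prop) :
    {y | (∃ a, f a = y) ∧ Q y}.ncard * Nat.card K = {a | Q (f a)}.ncard := by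
  have e : {a | Q (f a)} ≃ {y | (∃ a, f a = y) ∧ Q y} × K := by
    refine
    { toFun := fun a => (⟨f a, ⟨a, rfl⟩, a.2⟩, ⟨(a : A) - Classical.choose
        (⟨a, rfl⟩ : ∃ b, f b = f a), ?_⟩)
      invFun := fun p => ⟨Classical.choose p.1.2.1 + p.2, ?_⟩
      left_inv := ?_
      right_inv := ?_ }
    · rw [← hf]
      exact Classical.choose_spec (⟨a, rfl⟩ : ∃ b, f b = f a)
    · have h := Classical.choose_spec p.1.2.1
      have : f (Classical.choose p.1.2.1 + p.2) = p.1 := by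
        refine Eq.trans ?_ h
        rw [eq_comm, hf]
        simp
      change Q _
      rw [this]; exact p.1.2.2
    · intro a
      simp
    · rintro ⟨⟨y, hy, hQ⟩, k⟩
      have h := Classical.choose_spec hy
      have : f (Classical.choose hy + k) = y := by
        refine Eq.trans ?_ h
        rw [eq_comm, hf]
        simp
      ext1
      · exact Subtype.ext this
      · apply Subtype.ext
        simp [this]
  have := Nat.card_congr e
  rw [Nat.card_prod] at this
  exact this.symm

end
end GRab

namespace GRab

section
variable {A X ι : Type*} [AddCommGroup A] [AddAction A X]

theorem ncard_shift (Q : A → Prop) (a : A) : {u | Q (u - a)}.ncard = {u | Q u}.ncard := by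
  have : {u | Q (u - a)} = (fun u => u + a) '' {u | Q u} := by
    ext u
    constructor
    · intro h; exact ⟨u - a, h, by simp⟩
    · rintro ⟨v, hv, rfl⟩; simpa using hv
  rw [this, Set.ncard_image_of_injective _ (add_left_injective a)]

theorem Coord.exists_cl (D : Coord A X ι) : ∃ cl : X → ι, (∀ i a, cl (D.pt i a) = i) ∧
    ∀ x, ∃ a, D.pt (cl x) a = x := by
  choose cl r h using D.surj
  exact ⟨cl, fun i a => ((D.eq_iff _ _ _ _).1 (h (D.pt i a))).1, fun x => ⟨r x, h x⟩⟩

theorem Coord.orbit_count [Finite A] (D : Coord A X ι) {cl : X → ι} (h1 : ∀ i a, cl (D.pt i a) = i)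
    (h2 : ∀ x, ∃ a, D.pt (cl x) a = x) (j : ι) (Q : X → Prop) :
    {y | cl y = j ∧ Q y}.ncard * Nat.card (D.K j) = {u | Q (D.pt j u)}.ncard := by
  rw [← fibre_count (D.K j) (D.pt j) (fun a b => by simp [D.eq_iff]) Q]
  congr 2
  ext y
  simp only [Set.mem_ofPred_eq]
  refine and_congr_left fun _ => ?_
  constructor
  · rintro rfl; exact h2 y
  · rintro ⟨a, rfl⟩; exact h1 _ _

theorem Coord.card_orbit [Finite A] (D : Coord A X ι) {cl : X → ι} (h1 : ∀ i a, cl (D.pt i a) = i)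
    (h2 : ∀ x, ∃ a, D.pt (cl x) a = x) (j : ι) :
    {y | cl y = j}.ncard * Nat.card (D.K j) = Nat.card A := by
  have := D.orbit_count h1 h2 j (fun _ => True)
  simpa [Set.ncard_univ] using this

theorem Coord.count_pres [Finite A] (D : Coord A X ι) {cl : X → ι} (h1 : ∀ i a, cl (D.pt i a) = i)
    (h2 : ∀ x, ∃ a, D.pt (cl x) a = x) (γ : Sym2 X → Fin 4) (σ : Equiv.Perm X)
    (hσ : ∀ x y, γ s(σ x, σ y) = γ s(x, y)) (j k : ι) (hjk : ∀ y, cl (σ y) = k ↔ cl y = j) :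
    Nat.card (D.K k) = Nat.card (D.K j) ∧ ∀ x c,
    {u | γ s(σ x, D.pt k u) = c}.ncard = {u | γ s(x, D.pt j u) = c}.ncard := by
  have key : ∀ Q : X → Prop, {y | cl y = k ∧ Q y}.ncard = {y | cl y = j ∧ Q (σ y)}.ncard := by
    intro Q
    rw [← Set.ncard_image_of_injective {y | cl y = j ∧ Q (σ y)} σ.injective]
    congr 1
    ext y
    constructor
    · rintro ⟨h, h'⟩
      refine ⟨σ.symm y, ⟨?_, ?_⟩, by simp⟩
      · rw [← hjk]; simpa using h
      · simpa using h'
    · rintro ⟨z, ⟨h, h'⟩, rfl⟩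
      exact ⟨(hjk z).2 h, h'⟩
  have hK : Nat.card (D.K k) = Nat.card (D.K j) := by
    have e1 := D.card_orbit h1 h2 k
    have e2 := D.card_orbit h1 h2 j
    have e3 := key (fun _ => True)
    simp only [and_true] at e3
    rw [e3, ← e2] at e1
    refine Nat.eq_of_mul_eq_mul_left ?_ e1
    rcases Nat.eq_zero_or_pos ({y | cl y = j}.ncard) with h | h
    · rw [h, zero_mul] at e2
      have : 0 < Nat.card A := Nat.card_pos
      omega
    · exact h
  refine ⟨hK, fun x c => ?_⟩
  rw [← D.orbit_count h1 h2 k (fun y => γ s(σ x, y) = c), ← D.orbit_count h1 h2 j (fun y => γ s(x, y) = c),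
    hK, key]
  simp only [hσ]

theorem main_noniso [Finite ι] [Finite A] (D : Coord A X ι) (hcl : Closed A X)
    (hiso : ∀ i, Exc 2 (A ⧸ D.K i) → ∃ j, j ≠ i ∧ D.K i ⊔ D.K j ≠ ⊤)
    (hnot : ¬ (Nat.card X = 2 ∧ ∀ (a : A) (x : X), a +ᵥ x = x)) : Rep A X := by
  obtain ⟨cl, h1, h2⟩ := D.exists_cl
  obtain ⟨F, E, c, hc, hF, hb⟩ := build D hcl hiso
  have hfinX : Finite X := Finite.of_surjective (fun p : ι × A => D.pt p.1 p.2) (fun x => by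
    obtain ⟨i, a, h⟩ := D.surj x
    exact ⟨(i, a), h⟩)
  -- reduce to class preservation
  suffices hs : ∃ s : ι → Equiv.Perm (Fin 4), (∀ i, s i 0 = 0) ∧ ∀ γ : Sym2 X → Fin 4,
      (∀ i a b, γ s(D.pt i a, D.pt i b) = s i (c i ((b - a : A) : A ⧸ D.K i))) →
      (∀ i j a b, i ≠ j → γ s(D.pt i a, D.pt j b) = (F i j (b - a)).castSucc) →
      ∀ σ : Equiv.Perm X, (∀ x y, γ s(σ x, σ y) = γ s(x, y)) → ∀ y, cl (σ y) = cl y by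
    obtain ⟨s, hs0, hs⟩ := hs
    obtain ⟨γ, hγ1, hγ2, hγ3⟩ := hb s
    refine ⟨γ, fun σ => ⟨?_, ?_⟩⟩
    · rintro ⟨g, hg⟩ x y -
      rw [← hg, ← hg]
      obtain ⟨i, a, rfl⟩ := D.surj x
      obtain ⟨j, b, rfl⟩ := D.surj y
      rw [D.vadd, D.vadd]
      by_cases h : i = j
      · subst h
        rw [hγ1, hγ1, add_sub_add_left_eq_sub]
      · rw [hγ2 _ _ _ _ h, hγ2 _ _ _ _ h, add_sub_add_left_eq_sub]
    · intro hσ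
      have hdiag : ∀ x, γ s(x, x) = 0 := by
        intro x
        obtain ⟨i, a, rfl⟩ := D.surj x
        rw [hγ1, sub_self, QuotientAddGroup.mk_zero, (hc i).zero, hs0]
      have hσ' : ∀ x y, γ s(σ x, σ y) = γ s(x, y) := by
        intro x y
        by_cases h : x = y
        · subst h; rw [hdiag, hdiag]
        · exact hσ x y h
      refine hγ3 σ hσ' fun i a => ?_
      obtain ⟨b, hb⟩ := h2 (σ (D.pt i a))
      rw [hs γ hγ1 hγ2 σ hσ', h1] at hb
      exact ⟨b, hb.symm⟩
  -- orbits with `s i = 1` are mapped into orbits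
  have hconst : ∀ s : ι → Equiv.Perm (Fin 4), ∀ γ : Sym2 X → Fin 4,
      (∀ i a b, γ s(D.pt i a, D.pt i b) = s i (c i ((b - a : A) : A ⧸ D.K i))) →
      (∀ i j a b, i ≠ j → γ s(D.pt i a, D.pt j b) = (F i j (b - a)).castSucc) →
      ∀ σ : Equiv.Perm X, (∀ x y, γ s(σ x, σ y) = γ s(x, y)) → ∀ i, s i = 1 →
      ∀ a, cl (σ (D.pt i a)) = cl (σ (D.pt i 0)) := by
    intro s γ hγ1 hγ2 σ hσ i hsi
    have h3 : ∀ x y, γ s(x, y) = 3 → cl x = cl y := by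
      intro x y
      obtain ⟨j, a, rfl⟩ := D.surj x
      obtain ⟨k, b, rfl⟩ := D.surj y
      rw [h1, h1]
      intro h
      by_contra hjk
      rw [hγ2 _ _ _ _ hjk] at h
      exact (Fin.castSucc_lt_last _).ne h
    let H : AddSubgroup A :=
      { carrier := {h | ∀ a, cl (σ (D.pt i (a + h))) = cl (σ (D.pt i a))}
        zero_mem' := by intro a; rw [add_zero]
        add_mem' := by
          intro x y hx hy a
          rw [← add_assoc, hy, hx]
        neg_mem' := by
          intro x hx a
          have := hx (a + -x)
          rw [neg_add_cancel_right] at this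
          exact this.symm }
    have hH : ∀ h : A, c i (h : A ⧸ D.K i) = 3 → h ∈ H := by
      intro h hh a
      apply h3
      rw [hσ, hγ1, hsi, Equiv.Perm.one_apply, sub_add_cancel_left, QuotientAddGroup.mk_neg,
        (hc i).even, hh]
    have hK : ∀ h ∈ D.K i, h ∈ H := by
      intro h hh a
      have : D.pt i (a + h) = D.pt i a := by
        rw [D.eq_iff]; refine ⟨rfl, ?_⟩
        rw [sub_add_cancel_left]; exact neg_mem hh
      rw [this]
    have htop : H.map (QuotientAddGroup.mk' (D.K i)) = ⊤ := by
      rw [eq_top_iff, ← (hc i).gen, AddSubgroup.closure_le]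
      intro q hq
      obtain ⟨h, rfl⟩ := QuotientAddGroup.mk_surjective q
      exact ⟨h, hH h hq, rfl⟩
    intro a
    have : (a : A ⧸ D.K i) ∈ H.map (QuotientAddGroup.mk' (D.K i)) := by rw [htop]; trivial
    obtain ⟨b, hb, hba⟩ := this
    have hba' : (b : A ⧸ D.K i) = a := hba
    rw [QuotientAddGroup.eq] at hba'
    have hmem : a ∈ H := by
      have := add_mem hb (hK _ hba')
      rwa [add_neg_cancel_left] at this
    have := hmem 0
    rwa [zero_add] at this
  by_cases hι : 3 ≤ Nat.card ι
  · -- many orbits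
    refine ⟨fun _ => 1, fun _ => rfl, fun γ hγ1 hγ2 σ hσ => ?_⟩
    have hco := hconst _ γ hγ1 hγ2 σ hσ
    obtain ⟨p, hp⟩ : ∃ p : ι → ι, ∀ y, cl (σ y) = p (cl y) := by
      refine ⟨fun i => cl (σ (D.pt i 0)), fun y => ?_⟩
      obtain ⟨i, a, rfl⟩ := D.surj y
      rw [h1]
      exact hco i rfl a
    have hps : Function.Surjective p := by
      intro j
      refine ⟨cl (σ.symm (D.pt j 0)), ?_⟩
      rw [← hp, Equiv.apply_symm_apply, h1]
    have hpb : Function.Bijective p := Finite.surjective_iff_bijective.1 hps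
    have hπ := hF hι (Equiv.ofBijective p hpb) (by
      intro i j hij e
      have hcp := (D.count_pres h1 h2 γ σ hσ j (p j) (fun y => by
        rw [hp, hpb.1.eq_iff])).2 (D.pt i 0) e.castSucc
      obtain ⟨a, ha⟩ := h2 (σ (D.pt i 0))
      rw [hp, h1] at ha
      rw [← ha] at hcp
      have hij' : p i ≠ p j := fun h => hij (hpb.1 h)
      simp only [hγ2 _ _ _ _ hij, hγ2 _ _ _ _ hij', Fin.castSucc_inj] at hcp
      rw [ncard_shift (fun u => F (p i) (p j) u = e), ncard_shift (fun u => F i j u = e)] at hcp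
      exact hcp)
    intro y
    rw [hp]
    exact hπ (cl y)
  by_cases hι1 : Nat.card ι ≤ 1
  · refine ⟨fun _ => 1, fun _ => rfl, fun γ hγ1 hγ2 σ hσ y => ?_⟩
    have : Subsingleton ι := Finite.card_le_one_iff_subsingleton.1 hι1
    exact Subsingleton.elim _ _
  -- two orbits
  have hι2 : Nat.card ι = 2 := by omega
  obtain ⟨i1, i2, hne, hall, hle⟩ : ∃ i1 i2 : ι, i1 ≠ i2 ∧ (∀ k, k = i1 ∨ k = i2) ∧
      Nat.card (D.K i2) ≤ Nat.card (D.K i1) := by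
    obtain ⟨x, y, hxy, hu⟩ := Nat.card_eq_two_iff.1 hι2
    have hall : ∀ k, k = x ∨ k = y := by
      intro k
      have : k ∈ ({x, y} : Set ι) := by rw [hu]; trivial
      simpa using this
    rcases le_total (Nat.card (D.K y)) (Nat.card (D.K x)) with h | h
    · exact ⟨x, y, hxy, hall, h⟩
    · exact ⟨y, x, hxy.symm, fun k => (hall k).symm, h⟩
  classical
  refine ⟨fun i => if i = i1 then Equiv.swap 2 3 else 1, ?_, ?_⟩
  · intro i
    dsimp only
    split_ifs
    · decide
    · rfl
  intro γ hγ1 hγ2 σ hσ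
  have hco := hconst _ γ hγ1 hγ2 σ hσ i2 (by simp [hne.symm])
  have hco' : ∀ y, cl y = i2 → cl (σ y) = cl (σ (D.pt i2 0)) := by
    intro y hy
    obtain ⟨a, ha⟩ := h2 y
    rw [hy] at ha
    rw [← ha, hco]
  rcases hall (cl (σ (D.pt i2 0))) with h | h
  · exfalso
    rw [h] at hco'
    have hsub : σ '' {y | cl y = i2} ⊆ {y | cl y = i1} := by
      rintro _ ⟨y, hy, rfl⟩; exact hco' y hy
    have hApos : 0 < Nat.card A := Nat.card_pos
    have e1 := D.card_orbit h1 h2 i1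
    have e2 := D.card_orbit h1 h2 i2
    have hle' : {y | cl y = i1}.ncard ≤ {y | cl y = i2}.ncard := by
      by_contra hlt
      push Not at hlt
      have : {y | cl y = i2}.ncard * Nat.card (D.K i2) < {y | cl y = i1}.ncard * Nat.card (D.K i1) :=
        Nat.mul_lt_mul_of_lt_of_le hlt hle (Nat.pos_of_ne_zero (by
          intro h0; rw [h0, mul_zero] at e1; omega))
      omega
    have heq : σ '' {y | cl y = i2} = {y | cl y = i1} := by
      apply Set.eq_of_subset_of_ncard_le hsub
      · rw [Set.ncard_image_of_injective _ σ.injective]; exact hle'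
    have hiff : ∀ y, cl (σ y) = i1 ↔ cl y = i2 := by
      intro y
      refine ⟨fun hy => ?_, hco' y⟩
      have : σ y ∈ σ '' {y | cl y = i2} := by rw [heq]; exact hy
      obtain ⟨z, hz, hzy⟩ := this
      rw [← σ.injective hzy]; exact hz
    obtain ⟨hK, hcount⟩ := D.count_pres h1 h2 γ σ hσ i2 i1 hiff
    obtain ⟨a, ha⟩ := h2 (σ (D.pt i2 0))
    rw [h] at ha
    have hcount' := hcount (D.pt i2 0)
    rw [← ha] at hcount'
    simp only [hγ1, if_true, if_neg hne.symm, Equiv.Perm.one_apply] at hcount'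
    have fc : ∀ i (Q : A ⧸ D.K i → Prop), {q | Q q}.ncard * Nat.card (D.K i) =
        {u : A | Q (u : A ⧸ D.K i)}.ncard := by
      intro i Q
      rw [← fibre_count (D.K i) (fun a : A => (a : A ⧸ D.K i)) (fun a b => by
        rw [QuotientAddGroup.eq, neg_add_eq_sub]) Q]
      congr 2
      ext q
      simp only [Set.mem_ofPred_eq]
      refine ⟨fun h => ⟨QuotientAddGroup.mk_surjective q, h⟩, fun h => h.2⟩
    have hKpos : 0 < Nat.card (D.K i2) := Nat.card_pos
    have hcount2 : ∀ e, {q | Equiv.swap 2 3 (c i1 q) = e}.ncard = {q | c i2 q = e}.ncard := by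
      intro e
      have := hcount' e
      rw [ncard_shift (fun u : A => Equiv.swap 2 3 (c i1 (u : A ⧸ D.K i1)) = e),
        ncard_shift (fun u : A => (c i2 (u : A ⧸ D.K i2)) = e),
        ← fc i1 (fun q => Equiv.swap 2 3 (c i1 q) = e), ← fc i2 (fun q => c i2 q = e), hK] at this
      exact Nat.eq_of_mul_eq_mul_right hKpos this
    have sw2 : ∀ x : Fin 4, Equiv.swap 2 3 x = 2 ↔ x = 3 := by decide
    have sw3 : ∀ x : Fin 4, Equiv.swap 2 3 x = 3 ↔ x = 2 := by decide
    have k2 := hcount2 2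
    have k3 := hcount2 3
    simp only [sw2] at k2
    simp only [sw3] at k3
    have hidx : (D.K i1).index = (D.K i2).index := by
      have f1 := (D.K i1).index_mul_card
      have f2 := (D.K i2).index_mul_card
      rw [hK, ← f2] at f1
      exact Nat.eq_of_mul_eq_mul_right hKpos f1
    have htriv : (D.K i2).index = 1 := by
      by_contra hi
      have hnt : ∀ i, (D.K i).index ≠ 1 → Nontrivial (A ⧸ D.K i) := by
        intro i hi
        rw [← Finite.one_lt_card_iff_nontrivial]
        have : Nat.card (A ⧸ D.K i) = (D.K i).index := rfl
        have h0 : 0 < Nat.card (A ⧸ D.K i) := Nat.card_pos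
        omega
      have g2 := (hc i2).cnt (hnt i2 hi)
      have g1 := (hc i1).cnt (hnt i1 (by rw [hidx]; exact hi))
      omega
    have hKtop : ∀ i, D.K i = ⊤ := by
      intro i
      rw [← AddSubgroup.index_eq_one]
      rcases hall i with rfl | rfl
      · rw [hidx, htriv]
      · exact htriv
    apply hnot
    constructor
    · rw [← hι2]
      apply Nat.card_congr
      refine Equiv.ofBijective cl ⟨?_, fun i => ⟨D.pt i 0, h1 _ _⟩⟩
      intro x y hxy
      obtain ⟨a, ha⟩ := h2 x
      obtain ⟨b, hb⟩ := h2 y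
      rw [← ha, ← hb, D.eq_iff]
      exact ⟨hxy, by rw [hKtop]; trivial⟩
    · intro g x
      obtain ⟨i, b, rfl⟩ := D.surj x
      rw [D.vadd, D.eq_iff]
      exact ⟨rfl, by rw [hKtop]; trivial⟩
  · rw [h] at hco'
    intro y
    have hinv := inv_of_inj (P := fun y => cl y = i2) σ.injective hco'
    rcases hall (cl y) with hy | hy
    · rcases hall (cl (σ y)) with hy' | hy'
      · rw [hy, hy']
      · rw [hinv y hy', hy']
    · rw [hy, hco' y hy]

end
end GRab

namespace GRab

section
variable {A X Y : Type*} [AddCommGroup A] [AddAction A X] [AddAction A Y]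

/-- `X` is the disjoint union of an isolated orbit (the range of `q`) and of `Y`. -/
structure Peel (K : AddSubgroup A) (q : A → X) (j : Y → X) : Prop where
  inj : Function.Injective j
  jv : ∀ (g : A) y, g +ᵥ j y = j (g +ᵥ y)
  cover : ∀ x, (∃ a, q a = x) ∨ ∃ y, j y = x
  disj : ∀ a y, q a ≠ j y
  eq_iff : ∀ a b, q a = q b ↔ b - a ∈ K
  qv : ∀ g a, g +ᵥ q a = q (g + a)
  two : ∀ a, a + a ∈ K
  iso : ∀ (y : Y) (g : A), ∃ k ∈ K, k +ᵥ y = g +ᵥ y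
  card : K.index = 4

variable {K : AddSubgroup A} {q : A → X} {j : Y → X}

open Classical in
theorem Peel.closed (P : Peel K q j) (hcl : Closed A X) : Closed A Y := by
  intro τ h1 h2
  have hext : ∃ σ : Equiv.Perm X, (∀ y, σ (j y) = j (τ y)) ∧ ∀ a, σ (q a) = q a := by
    refine ⟨τ.extendDomain (Equiv.ofInjective j P.inj), ?_, ?_⟩
    · intro y
      have := Equiv.Perm.extendDomain_apply_image τ (Equiv.ofInjective j P.inj) y
      simpa using this
    · intro a
      apply Equiv.Perm.extendDomain_apply_not_subtype
      rintro ⟨y, hy⟩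
      exact P.disj a y hy.symm
  obtain ⟨σ, hj, hq⟩ := hext
  have mix : ∀ a y, ∃ g : A, g +ᵥ q a = σ (q a) ∧ g +ᵥ j y = σ (j y) := by
    intro a y
    obtain ⟨g, hg⟩ := h1 y
    obtain ⟨k, hk, hk'⟩ := P.iso y g
    refine ⟨k, ?_, ?_⟩
    · rw [hq, P.qv, P.eq_iff]
      simpa using hk
    · rw [hj, P.jv, hk', hg]
  obtain ⟨a, ha⟩ := hcl σ (by
      intro x
      rcases P.cover x with ⟨a, rfl⟩ | ⟨y, rfl⟩
      · exact ⟨0, by rw [hq, zero_vadd]⟩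
      · obtain ⟨g, hg⟩ := h1 y
        exact ⟨g, by rw [P.jv, hj, hg]⟩) (by
      intro x x'
      rcases P.cover x with ⟨a, rfl⟩ | ⟨y, rfl⟩ <;> rcases P.cover x' with ⟨b, rfl⟩ | ⟨z, rfl⟩
      · exact ⟨0, Or.inl ⟨by rw [hq, zero_vadd], by rw [hq, zero_vadd]⟩⟩
      · obtain ⟨g, hg⟩ := mix a z
        exact ⟨g, Or.inl hg⟩
      · obtain ⟨g, hg⟩ := mix b y
        exact ⟨g, Or.inl ⟨hg.2, hg.1⟩⟩
      · obtain ⟨g, hg⟩ := h2 y z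
        refine ⟨g, ?_⟩
        rw [P.jv, P.jv, hj, hj, P.inj.eq_iff, P.inj.eq_iff, P.inj.eq_iff, P.inj.eq_iff]
        exact hg)
  refine ⟨a, fun y => P.inj ?_⟩
  rw [← P.jv, ha, hj]

open Classical in
theorem Peel.exists_col (P : Peel K q j) (p : Fin 4) (w : Y → Fin 4) (γ' : Sym2 Y → Fin 4) :
    ∃ (γ : Sym2 X → Fin 4) (col : A ⧸ K → Fin 4), Function.Bijective col ∧ col 0 = p ∧
      (∀ a b, γ s(q a, q b) = col ((b - a : A) : A ⧸ K)) ∧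
      (∀ a y, γ s(q a, j y) = w y) ∧ (∀ y z, γ s(j y, j z) = γ' s(y, z)) := by
  have hcard : Nat.card (A ⧸ K) = 4 := P.card
  have hfin : Finite (A ⧸ K) := Nat.finite_of_card_ne_zero (by rw [hcard]; norm_num)
  have e : A ⧸ K ≃ Fin 4 := Finite.equivFinOfCardEq hcard
  obtain ⟨col, hcol, hcol0⟩ : ∃ col : A ⧸ K → Fin 4, Function.Bijective col ∧ col 0 = p :=
    ⟨e.trans (Equiv.swap (e 0) p), Equiv.bijective _, by simp⟩
  have hev : ∀ a b : A, col ((b - a : A) : A ⧸ K) = col ((a - b : A) : A ⧸ K) := by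
    intro a b
    congr 1
    rw [QuotientAddGroup.eq]
    have := P.two (a - b)
    convert this using 1; abel
  obtain ⟨r, hr⟩ : ∃ r : X → A ⊕ Y, ∀ x, Sum.elim q j (r x) = x := by
    have : ∀ x, ∃ s : A ⊕ Y, Sum.elim q j s = x := by
      intro x
      rcases P.cover x with ⟨a, rfl⟩ | ⟨y, rfl⟩
      · exact ⟨Sum.inl a, rfl⟩
      · exact ⟨Sum.inr y, rfl⟩
    choose r hr using this
    exact ⟨r, hr⟩
  let g : A ⊕ Y → A ⊕ Y → Fin 4 := fun s t => match s, t with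
    | Sum.inl a, Sum.inl b => col ((b - a : A) : A ⧸ K)
    | Sum.inl _, Sum.inr y => w y
    | Sum.inr y, Sum.inl _ => w y
    | Sum.inr y, Sum.inr z => γ' s(y, z)
  have hrj : ∀ y, r (j y) = Sum.inr y := by
    intro y
    have := hr (j y)
    rcases h : r (j y) with a | z
    · rw [h] at this; exact absurd this (P.disj _ _)
    · rw [h] at this; rw [P.inj this]
  have hrq : ∀ a, ∃ b, r (q a) = Sum.inl b ∧ b - a ∈ K := by
    intro a
    have := hr (q a)
    rcases h : r (q a) with b | z
    · rw [h] at this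
      exact ⟨b, rfl, (P.eq_iff _ _).1 this.symm⟩
    · rw [h] at this; exact absurd this.symm (P.disj _ _)
  refine ⟨Sym2.lift ⟨fun x x' => g (r x) (r x'), ?_⟩, col, hcol, hcol0, ?_, ?_, ?_⟩
  · intro x x'
    change g (r x) (r x') = g (r x') (r x)
    rcases r x with a | y <;> rcases r x' with b | z
    · exact hev a b
    · rfl
    · rfl
    · change γ' _ = γ' _
      rw [Sym2.eq_swap]
  · intro a b
    rw [Sym2.lift_mk]
    obtain ⟨a', ha, ha'⟩ := hrq a
    obtain ⟨b', hb, hb'⟩ := hrq b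
    change g (r (q a)) (r (q b)) = _
    rw [ha, hb]
    change col _ = _
    congr 1
    rw [QuotientAddGroup.eq]
    have := sub_mem ha' hb'
    convert this using 1; abel
  · intro a y
    rw [Sym2.lift_mk]
    obtain ⟨a', ha, ha'⟩ := hrq a
    change g (r (q a)) (r (j y)) = _
    rw [ha, hrj]
  · intro y z
    rw [Sym2.lift_mk]
    change g (r (j y)) (r (j z)) = _
    rw [hrj, hrj]

theorem Peel.trans_of (P : Peel K q j) {γ : Sym2 X → Fin 4} {col : A ⧸ K → Fin 4}
    (hcol : Function.Bijective col) (hγ : ∀ a b, γ s(q a, q b) = col ((b - a : A) : A ⧸ K))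
    (σ : Equiv.Perm X) (hσ : ∀ x y, x ≠ y → γ s(σ x, σ y) = γ s(x, y))
    (hO : ∀ a, ∃ b, σ (q a) = q b) : ∃ t, ∀ a, σ (q a) = q (a + t) := by
  choose f hf using hO
  refine ⟨f 0, fun a => ?_⟩
  by_cases h : q 0 = q a
  · rw [← h, hf 0, P.eq_iff]
    have := (P.eq_iff _ _).1 h
    convert this using 1; abel
  · have := hσ _ _ h
    rw [hf, hf, hγ, hγ] at this
    have := hcol.1 this
    rw [QuotientAddGroup.eq] at this
    rw [hf, P.eq_iff]
    convert this using 1; abel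

/-- The colour `p` cannot be used between the isolated orbit and the rest. -/
def Bad (A : Type*) {Y : Type*} [AddCommGroup A] [AddAction A Y] (γ : Sym2 Y → Fin 4) (p : Fin 4) : Prop :=
  ∃ C : Set Y, C.Nonempty ∧ (∀ x ∈ C, ∀ y, y ∈ C ↔ ∃ a : A, a +ᵥ x = y) ∧
    (∀ x ∈ C, ∀ y ∈ C, x ≠ y → γ s(x, y) ≠ p) ∧
    (∀ e, e ≠ p → ∃ x ∈ C, ∃ y ∈ C, x ≠ y ∧ γ s(x, y) = e) ∧
    ∀ x ∈ C, ∀ y, y ∉ C → γ s(x, y) = p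

theorem exists_good (γ : Sym2 Y → Fin 4) : ∃ p, ¬ Bad A γ p := by
  by_contra hcon
  push Not at hcon
  obtain ⟨C, hne, h1, h2, h3, h4⟩ := hcon 0
  obtain ⟨C', hne', h1', h2', h3', h4'⟩ := hcon 1
  by_cases h : ∃ x, x ∈ C ∧ x ∈ C'
  · obtain ⟨x, hx, hx'⟩ := h
    have heq : ∀ y, y ∈ C ↔ y ∈ C' := fun y => by rw [h1 x hx, h1' x hx']
    obtain ⟨u, hu, v, hv, huv, hc⟩ := h3 1 (by decide)
    exact h2' u ((heq u).1 hu) v ((heq v).1 hv) huv hc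
  · push Not at h
    obtain ⟨x, hx⟩ := hne
    obtain ⟨y, hy⟩ := hne'
    have e1 := h4 x hx y (fun h' => h y h' hy)
    have e2 := h4' y hy x (h x hx)
    rw [Sym2.eq_swap, e1] at e2
    exact absurd e2 (by decide)

theorem exists_restrict [Finite Y] (hinj : Function.Injective j) (σ : Equiv.Perm X)
    (h : ∀ y, ∃ z, σ (j y) = j z) : ∃ τ : Equiv.Perm Y, ∀ y, σ (j y) = j (τ y) := by
  choose f hf using h
  have hfi : Function.Injective f := by
    intro y z hyz
    apply hinj; apply σ.injective
    rw [hf, hf, hyz]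
  exact ⟨Equiv.ofBijective f (Finite.injective_iff_bijective.1 hfi), hf⟩

open Classical in
theorem Peel.exists_transl (P : Peel K q j) (g : A) :
    ∃ τ : Equiv.Perm X, (∀ a, τ (q a) = q (g + a)) ∧ ∀ y, τ (j y) = j y := by
  have hdis : ∀ a, ¬ ∃ y, j y = q a := by
    rintro a ⟨y, hy⟩
    exact P.disj a y hy.symm
  have h1 : ∀ (h : A) a, (if ∃ y, j y = q a then q a else h +ᵥ q a) = q (h + a) := by
    intro h a
    rw [if_neg (hdis a), P.qv]
  have h2 : ∀ (h : A) y, (if ∃ z, j z = j y then j y else h +ᵥ j y) = j y := by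
    intro h y
    rw [if_pos ⟨y, rfl⟩]
  refine ⟨⟨fun x => if ∃ y, j y = x then x else g +ᵥ x, fun x => if ∃ y, j y = x then x else (-g) +ᵥ x,
    ?_, ?_⟩, ?_, ?_⟩
  · intro x
    rcases P.cover x with ⟨a, rfl⟩ | ⟨y, rfl⟩
    · simp only [h1, neg_add_cancel_left]
    · simp only [h2]
  · intro x
    rcases P.cover x with ⟨a, rfl⟩ | ⟨y, rfl⟩
    · simp only [h1, add_neg_cancel_left]
    · simp only [h2]
  · intro a; exact h1 g a
  · intro y; exact h2 g y

theorem Peel.rep [Finite X] (P : Peel K q j) (hcl : Closed A X) (hrep : Rep A Y) : Rep A X := by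
  have hY : Finite Y := Finite.of_injective j P.inj
  obtain ⟨γ', hγ'⟩ := hrep
  obtain ⟨p, hp⟩ := exists_good (A := A) γ'
  obtain ⟨γ, col, hcol, hcol0, hqq, hqj, hjj⟩ := P.exists_col p (fun _ => p) γ'
  have hqne : ∀ a b, q a ≠ q b → γ s(q a, q b) ≠ p := by
    intro a b hab h
    rw [hqq, ← hcol0] at h
    have := hcol.1 h
    rw [QuotientAddGroup.eq_zero_iff, ← P.eq_iff] at this
    exact hab this
  have hact : ∀ (g : A) y z, y ≠ z → γ' s(g +ᵥ y, g +ᵥ z) = γ' s(y, z) := by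
    intro g y z hyz
    exact (hγ' (AddAction.toPerm g)).1 ⟨g, fun _ => rfl⟩ y z hyz
  have hjq : ∀ a y, γ s(j y, q a) = p := fun a y => by rw [Sym2.eq_swap, hqj]
  refine ⟨γ, fun σ => ⟨?_, ?_⟩⟩
  · rintro ⟨g, hg⟩ x x' hxx
    rw [← hg, ← hg]
    rcases P.cover x with ⟨a, rfl⟩ | ⟨y, rfl⟩ <;> rcases P.cover x' with ⟨b, rfl⟩ | ⟨z, rfl⟩
    · rw [P.qv, P.qv, hqq, hqq, add_sub_add_left_eq_sub]
    · rw [P.qv, P.jv, hqj, hqj]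
    · rw [P.qv, P.jv, hjq, hjq]
    · rw [P.jv, P.jv, hjj, hjj, hact]
      rintro rfl; exact hxx rfl
  intro hσ
  by_cases hO : ∀ a, ∃ b, σ (q a) = q b
  · obtain ⟨t, ht⟩ := P.trans_of hcol hqq σ hσ hO
    have hjy : ∀ y, ∃ z, σ (j y) = j z := by
      intro y
      rcases P.cover (σ (j y)) with ⟨a, ha⟩ | ⟨z, hz⟩
      · have := inv_of_inj (P := fun x => ∃ a, q a = x) σ.injective (by
          rintro _ ⟨a, rfl⟩
          exact ⟨a + t, (ht a).symm⟩) (j y) ⟨a, ha⟩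
        obtain ⟨b, hb⟩ := this
        exact absurd hb (P.disj _ _)
      · exact ⟨z, hz.symm⟩
    obtain ⟨τ, hτ⟩ := exists_restrict P.inj σ hjy
    obtain ⟨h, hh⟩ := (hγ' τ).2 (by
      intro y z hyz
      rw [← hjj, ← hjj, ← hτ, ← hτ]
      exact hσ _ _ (fun e => hyz (P.inj e)))
    have hqt : ∀ a, t +ᵥ q a = σ (q a) := fun a => by rw [ht, P.qv, add_comm]
    have hjh : ∀ y, h +ᵥ j y = σ (j y) := fun y => by rw [hτ, P.jv, hh]
    have mix : ∀ a y, ∃ g : A, g +ᵥ q a = σ (q a) ∧ g +ᵥ j y = σ (j y) := by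
      intro a y
      obtain ⟨k, hk, hk'⟩ := P.iso y (h - t)
      refine ⟨t + k, ?_, ?_⟩
      · rw [ht, P.qv, P.eq_iff]
        rw [← neg_mem_iff]
        convert hk using 1; abel
      · rw [← hjh, P.jv, P.jv, add_vadd, hk', ← add_vadd, add_sub_cancel]
    refine hcl σ ?_ ?_
    · intro x
      rcases P.cover x with ⟨a, rfl⟩ | ⟨y, rfl⟩
      · exact ⟨t, hqt a⟩
      · exact ⟨h, hjh y⟩
    · intro x x'
      rcases P.cover x with ⟨a, rfl⟩ | ⟨y, rfl⟩ <;> rcases P.cover x' with ⟨b, rfl⟩ | ⟨z, rfl⟩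
      · exact ⟨t, Or.inl ⟨hqt a, hqt b⟩⟩
      · obtain ⟨g, hg⟩ := mix a z
        exact ⟨g, Or.inl hg⟩
      · obtain ⟨g, hg⟩ := mix b y
        exact ⟨g, Or.inl ⟨hg.2, hg.1⟩⟩
      · exact ⟨h, Or.inl ⟨hjh y, hjh z⟩⟩
  -- the image of the isolated orbit lies in `Y`
  exfalso
  push Not at hO
  obtain ⟨a0, ha0⟩ := hO
  have hout : ∀ a, ∃ y, j y = σ (q a) := by
    intro a
    rcases P.cover (σ (q a)) with ⟨b, hb⟩ | h
    swap
    · exact h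
    exfalso
    rcases P.cover (σ (q a0)) with ⟨c, hc⟩ | ⟨y, hy⟩
    · exact ha0 c hc.symm
    have hne : q a ≠ q a0 := by
      intro e
      rw [e, ← hy] at hb
      exact P.disj _ _ hb
    have e1 := hσ _ _ hne
    rw [← hb, ← hy, hqj] at e1
    exact hqne _ _ hne e1.symm
  choose k hk using hout
  apply hp
  have hkk : ∀ a b, k a = k b ↔ q a = q b := by
    intro a b
    rw [← P.inj.eq_iff, hk, hk, σ.injective.eq_iff]
  have hcolk : ∀ a b, q a ≠ q b → γ' s(k a, k b) = γ s(q a, q b) := by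
    intro a b hab
    rw [← hjj, hk, hk, hσ _ _ hab]
  have hoff : ∀ a y, (∀ b, k b ≠ y) → γ' s(k a, y) = p := by
    intro a y hy
    rcases P.cover (σ.symm (j y)) with ⟨b, hb⟩ | ⟨z, hz⟩
    · exfalso
      apply hy b
      apply P.inj
      rw [hk, hb, Equiv.apply_symm_apply]
    · have : j y = σ (j z) := by rw [hz, Equiv.apply_symm_apply]
      rw [← hjj, hk, this, hσ _ _ (P.disj _ _), hqj]
  -- conjugated translations
  have hconj : ∀ g : A, ∃ h : A, (∀ a, h +ᵥ k a = k (g + a)) ∧ ∀ y, (∀ b, k b ≠ y) → h +ᵥ y = y := by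
    intro g
    obtain ⟨τ, hτq, hτj⟩ := P.exists_transl g
    have hτ : ∀ x y, x ≠ y → γ s(τ x, τ y) = γ s(x, y) := by
      intro x x' hxx
      rcases P.cover x with ⟨a, rfl⟩ | ⟨y, rfl⟩ <;> rcases P.cover x' with ⟨b, rfl⟩ | ⟨z, rfl⟩
      · rw [hτq, hτq, hqq, hqq, add_sub_add_left_eq_sub]
      · rw [hτq, hτj, hqj, hqj]
      · rw [hτq, hτj, hjq, hjq]
      · rw [hτj, hτj]
    obtain ⟨ρ, hρ⟩ : ∃ ρ : Equiv.Perm X, ∀ x, ρ (σ x) = σ (τ x) :=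
      ⟨(σ.symm.trans τ).trans σ, fun x => by simp⟩
    have hρc : ∀ x y, x ≠ y → γ s(ρ x, ρ y) = γ s(x, y) := by
      intro x y hxy
      obtain ⟨u, rfl⟩ := σ.surjective x
      obtain ⟨v, rfl⟩ := σ.surjective y
      have huv : u ≠ v := fun e => hxy (by rw [e])
      rw [hρ, hρ, hσ _ _ (fun e => huv (τ.injective e)), hτ _ _ huv, hσ _ _ huv]
    have hρk : ∀ a, ρ (j (k a)) = j (k (g + a)) := by
      intro a
      rw [hk, hρ, hτq, hk]
    have hρo : ∀ y, (∀ b, k b ≠ y) → ρ (j y) = j y := by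
      intro y hy
      rcases P.cover (σ.symm (j y)) with ⟨b, hb⟩ | ⟨z, hz⟩
      · exfalso
        apply hy b
        apply P.inj
        rw [hk, hb, Equiv.apply_symm_apply]
      · have : j y = σ (j z) := by rw [hz, Equiv.apply_symm_apply]
        rw [this, hρ, hτj]
    obtain ⟨θ, hθ⟩ := exists_restrict P.inj ρ (by
      intro y
      by_cases h : ∃ b, k b = y
      · obtain ⟨b, rfl⟩ := h
        exact ⟨_, hρk b⟩
      · push Not at h
        exact ⟨_, hρo y h⟩)
    obtain ⟨h, hh⟩ := (hγ' θ).2 (by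
      intro y z hyz
      rw [← hjj, ← hjj, ← hθ, ← hθ]
      exact hρc _ _ (fun e => hyz (P.inj e)))
    refine ⟨h, fun a => ?_, fun y hy => ?_⟩
    · rw [hh]; apply P.inj; rw [← hθ, hρk]
    · rw [hh]; apply P.inj; rw [← hθ, hρo y hy]
  refine ⟨Set.range k, ⟨k 0, 0, rfl⟩, ?_, ?_, ?_, ?_⟩
  · rintro _ ⟨a, rfl⟩ y
    constructor
    · rintro ⟨b, rfl⟩
      obtain ⟨h, hh, -⟩ := hconj (b - a)
      exact ⟨h, by rw [hh, sub_add_cancel]⟩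
    · rintro ⟨g, rfl⟩
      by_contra hcon
      have hcon' : ∀ b, k b ≠ g +ᵥ k a := fun b e => hcon ⟨b, e⟩
      obtain ⟨d, hd⟩ : ∃ d, d ∉ K := by
        by_contra hall
        push Not at hall
        have : K = ⊤ := by ext x; simp [hall x]
        have hc := P.card
        rw [this] at hc
        simp at hc
      obtain ⟨h, hh, hh'⟩ := hconj d
      have e1 := hh' _ hcon'
      rw [← add_vadd, add_comm, add_vadd, hh] at e1
      have e2 := (AddAction.injective g) e1
      rw [hkk, P.eq_iff] at e2
      apply hd
      rw [← neg_mem_iff]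
      convert e2 using 1; abel
  · rintro _ ⟨a, rfl⟩ _ ⟨b, rfl⟩ hab
    rw [Ne, hkk] at hab
    rw [hcolk _ _ hab]
    exact hqne _ _ hab
  · intro e he
    obtain ⟨u, hu⟩ := hcol.2 e
    obtain ⟨b, rfl⟩ := QuotientAddGroup.mk_surjective u
    have hab : q 0 ≠ q b := by
      intro h
      rw [P.eq_iff, sub_zero, ← QuotientAddGroup.eq_zero_iff] at h
      rw [h, hcol0] at hu
      exact he hu.symm
    refine ⟨k 0, ⟨0, rfl⟩, k b, ⟨b, rfl⟩, ?_, ?_⟩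
    · rwa [Ne, hkk]
    · rw [hcolk _ _ hab, hqq, sub_zero, hu]
  · rintro _ ⟨a, rfl⟩ y hy
    exact hoff a y (fun b e => hy ⟨b, e⟩)

open Classical in
theorem Peel.rep_two [Finite X] (P : Peel K q j) (hY : Nat.card Y = 2)
    (htriv : ∀ (a : A) (y : Y), a +ᵥ y = y) : Rep A X := by
  obtain ⟨y1, y2, hne, hu⟩ := Nat.card_eq_two_iff.1 hY
  have hall : ∀ y, y = y1 ∨ y = y2 := by
    intro k
    have : k ∈ ({y1, y2} : Set Y) := by rw [hu]; trivial
    simpa using this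
  obtain ⟨γ, col, hcol, hcol0, hqq, hqj, hjj⟩ :=
    P.exists_col 3 (fun y => if y = y1 then 3 else 0) (fun _ => 3)
  have hq1 : ∀ a, γ s(q a, j y1) = 3 := fun a => by rw [hqj, if_pos rfl]
  have hq2 : ∀ a, γ s(q a, j y2) = 0 := fun a => by rw [hqj, if_neg hne.symm]
  have hqne : ∀ a, ∀ e : Fin 4, e ≠ 3 → ∃ b, q a ≠ q b ∧ γ s(q a, q b) = e := by
    intro a e he
    obtain ⟨u, hu⟩ := hcol.2 e
    obtain ⟨b, rfl⟩ := QuotientAddGroup.mk_surjective u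
    refine ⟨a + b, ?_, by rw [hqq, add_sub_cancel_left, hu]⟩
    intro h
    rw [P.eq_iff, add_sub_cancel_left, ← QuotientAddGroup.eq_zero_iff] at h
    rw [h, hcol0] at hu
    exact he hu.symm
  refine ⟨γ, fun σ => ⟨?_, ?_⟩⟩
  · rintro ⟨g, hg⟩ x x' hxx
    rw [← hg, ← hg]
    rcases P.cover x with ⟨a, rfl⟩ | ⟨y, rfl⟩ <;> rcases P.cover x' with ⟨b, rfl⟩ | ⟨z, rfl⟩
    · rw [P.qv, P.qv, hqq, hqq, add_sub_add_left_eq_sub]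
    · rw [P.qv, P.jv, hqj, hqj, htriv]
    · rw [P.qv, P.jv, Sym2.eq_swap, hqj, Sym2.eq_swap, hqj, htriv]
    · rw [P.jv, P.jv, hjj, hjj]
  intro hσ
  have cov : ∀ x, (∃ a, q a = x) ∨ x = j y1 ∨ x = j y2 := by
    intro x
    rcases P.cover x with h | ⟨y, rfl⟩
    · exact Or.inl h
    · rcases hall y with rfl | rfl
      · exact Or.inr (Or.inl rfl)
      · exact Or.inr (Or.inr rfl)
  have hj1 : ∀ x, x ≠ j y1 → γ s(j y1, x) = 3 := by
    intro x hx
    rcases cov x with ⟨a, rfl⟩ | rfl | rfl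
    · rw [Sym2.eq_swap, hq1]
    · exact absurd rfl hx
    · rw [hjj]
  have hσ1 : ∀ x, x ≠ σ (j y1) → γ s(σ (j y1), x) = 3 := by
    intro x hx
    obtain ⟨z, rfl⟩ := σ.surjective x
    have hz : z ≠ j y1 := fun e => hx (by rw [e])
    rw [hσ _ _ hz.symm, hj1 z hz]
  have hf1 : σ (j y1) = j y1 := by
    rcases cov (σ (j y1)) with ⟨a, ha⟩ | h | h
    · exfalso
      obtain ⟨b, hb, hb'⟩ := hqne a 0 (by decide)
      rw [← ha] at hσ1
      rw [hσ1 _ hb.symm] at hb'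
      exact absurd hb' (by decide)
    · exact h
    · exfalso
      have := hσ1 (q 0) (by rw [h]; exact P.disj _ _)
      rw [h, Sym2.eq_swap, hq2] at this
      exact absurd this (by decide)
  have hσ2 : ∀ x, x ≠ j y1 → x ≠ σ (j y2) → γ s(σ (j y2), x) = 0 := by
    intro x hx hx'
    obtain ⟨z, rfl⟩ := σ.surjective x
    have hz : z ≠ j y2 := fun e => hx' (by rw [e])
    have hz1 : z ≠ j y1 := fun e => hx (by rw [e, hf1])
    rw [hσ _ _ hz.symm]
    rcases cov z with ⟨a, rfl⟩ | h | h
    · rw [Sym2.eq_swap, hq2]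
    · exact absurd h hz1
    · exact absurd h hz
  have hf2 : σ (j y2) = j y2 := by
    rcases cov (σ (j y2)) with ⟨a, ha⟩ | h | h
    · exfalso
      obtain ⟨b, hb, hb'⟩ := hqne a 1 (by decide)
      rw [← ha] at hσ2
      rw [hσ2 _ (P.disj _ _) hb.symm] at hb'
      exact absurd hb' (by decide)
    · exfalso
      rw [← hf1] at h
      exact hne (P.inj (σ.injective h)).symm
    · exact h
  obtain ⟨t, ht⟩ := P.trans_of hcol hqq σ hσ (by
    intro a
    rcases cov (σ (q a)) with ⟨b, hb⟩ | h | h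
    · exact ⟨b, hb.symm⟩
    · rw [← hf1] at h
      exact absurd (σ.injective h) (P.disj _ _)
    · rw [← hf2] at h
      exact absurd (σ.injective h) (P.disj _ _))
  refine ⟨t, fun x => ?_⟩
  rcases cov x with ⟨a, rfl⟩ | rfl | rfl
  · rw [ht, P.qv, add_comm]
  · rw [hf1, P.jv, htriv]
  · rw [hf2, P.jv, htriv]

end

theorem main (A : Type*) [AddCommGroup A] [Finite A] (n : ℕ) :
    ∀ (X : Type*) [AddAction A X] [Finite X], Nat.card X = n → Closed A X →
      Rep A X ∨ (Nat.card X = 2 ∧ ∀ (a : A) (x : X), a +ᵥ x = x) := by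
  induction n using Nat.strong_induction_on with
  | _ n ih =>
    intro X _ _ hn hcl
    obtain ⟨D⟩ := exists_coord_set A X
    by_cases hnot : Nat.card X = 2 ∧ ∀ (a : A) (x : X), a +ᵥ x = x
    · exact Or.inr hnot
    left
    by_cases hiso : ∀ i, Exc 2 (A ⧸ D.K i) → ∃ j, j ≠ i ∧ D.K i ⊔ D.K j ≠ ⊤
    · have : Finite (AddAction.orbitRel.Quotient A X) := Quotient.finite _
      exact main_noniso D hcl hiso hnot
    push Not at hiso
    obtain ⟨i, hi, hi'⟩ := hiso
    obtain ⟨cl, h1, h2⟩ := D.exists_cl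
    have hclv : ∀ (g : A) x, cl (g +ᵥ x) = cl x := by
      intro g x
      obtain ⟨k, a, rfl⟩ := D.surj x
      rw [D.vadd, h1, h1]
    let Y : SubAddAction A X := ⟨{x | cl x ≠ i}, by
      intro g x hx
      change cl (g +ᵥ x) ≠ i
      rw [hclv]; exact hx⟩
    have P : Peel (D.K i) (D.pt i) (fun y : Y => (y : X)) := by
      refine ⟨Subtype.val_injective, fun _ _ => rfl, ?_, ?_, ?_, ?_, ?_, ?_, ?_⟩
      · intro x
        by_cases h : cl x = i
        · left; rw [← h]; exact h2 x
        · exact Or.inr ⟨⟨x, h⟩, rfl⟩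
      · intro a y h
        apply y.2
        change cl (y : X) = i
        rw [← h, h1]
      · intro a b; simp [D.eq_iff]
      · intro g a; exact D.vadd g i a
      · intro a
        rw [← QuotientAddGroup.eq_zero_iff, QuotientAddGroup.mk_add, ← two_nsmul]
        exact hi.smul _
      · intro y g
        obtain ⟨⟨x, hx⟩, rfl⟩ : ∃ z : Y, z = y := ⟨y, rfl⟩
        obtain ⟨k, a, rfl⟩ := D.surj x
        have hki : k ≠ i := by
          have hx' : cl (D.pt k a) ≠ i := hx
          rwa [h1] at hx'
        have : g ∈ D.K i ⊔ D.K k := by rw [hi' k hki]; trivial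
        obtain ⟨u, hu, v, hv, huv⟩ := AddSubgroup.mem_sup.1 this
        refine ⟨u, hu, Subtype.ext ?_⟩
        change u +ᵥ D.pt k a = g +ᵥ D.pt k a
        rw [D.vadd, D.vadd, D.eq_iff]
        refine ⟨rfl, ?_⟩
        rw [← huv]
        convert hv using 1; abel
      · exact hi.card
    have hlt : Nat.card Y < n := by
      rw [← hn]
      exact Finite.card_subtype_lt (p := fun x => cl x ≠ i) (x := D.pt i 0) (by simp [h1])
    have : Finite Y := Finite.of_injective _ P.inj
    rcases ih _ hlt Y rfl (P.closed hcl) with h | ⟨h, h'⟩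
    · exact P.rep hcl h
    · exact P.rep_two h h'

end GRab

/-- An abelian subgroup `A ≤ Sym(X)` is the automorphism group of some coloured graph
on `X` iff it is the automorphism group of some 4-coloured graph on `X`. -/
theorem statement1 (X : Type*) [Fintype X] (A : Subgroup (Equiv.Perm X))
    (hab : ∀ a ∈ A, ∀ b ∈ A, a * b = b * a) :
    InGR A ↔ InGR4 A := by
  constructor
  swap
  · rintro ⟨γ, hγ⟩
    exact ⟨4, by norm_num, γ, hγ⟩
  rintro ⟨k, -, γ, hγ⟩
  letI : CommGroup A := { (inferInstance : Group A) with
    mul_comm := fun a b => Subtype.ext (hab a a.2 b b.2) }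
  letI : AddAction (Additive A) X :=
    { vadd := fun a x => (a.toMul : Equiv.Perm X) x
      zero_vadd := fun _ => rfl
      add_vadd := fun _ _ _ => rfl }
  have hv : ∀ (a : Additive A) (x : X), a +ᵥ x = (a.toMul : Equiv.Perm X) x := fun _ _ => rfl
  have hmem : ∀ σ : Equiv.Perm X, (∃ a : Additive A, ∀ x, a +ᵥ x = σ x) ↔ σ ∈ A := by
    intro σ
    constructor
    · rintro ⟨a, ha⟩
      have : (a.toMul : Equiv.Perm X) = σ := Equiv.ext ha
      rw [← this]; exact a.toMul.2
    · intro h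
      exact ⟨Additive.ofMul ⟨σ, h⟩, fun x => rfl⟩
  have hcl : GRab.Closed (Additive A) X := by
    intro σ _ h2
    rw [hmem, hγ]
    intro x y hxy
    obtain ⟨a, h⟩ := h2 x y
    have ha := (hγ _).1 a.toMul.2 x y hxy
    rw [← ha]
    rcases h with ⟨h, h'⟩ | ⟨h, h'⟩
    · rw [← h, ← h']; rfl
    · rw [← h, ← h', Sym2.eq_swap]; rfl
  have : Finite (Additive A) := inferInstanceAs (Finite A)
  rcases GRab.main (Additive A) _ X rfl hcl with ⟨γ', h⟩ | ⟨h, h'⟩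
  · refine ⟨γ', fun σ => ?_⟩
    rw [← hmem, h]
  · exfalso
    classical
    obtain ⟨x, y, hxy, hu⟩ := Nat.card_eq_two_iff.1 h
    have hall : ∀ z, z = x ∨ z = y := by
      intro z
      have : z ∈ ({x, y} : Set X) := by rw [hu]; trivial
      simpa using this
    have hs : Equiv.swap x y ∈ A := by
      rw [hγ]
      intro u v huv
      rcases hall u with rfl | rfl <;> rcases hall v with rfl | rfl
      · exact absurd rfl huv
      · rw [Equiv.swap_apply_left, Equiv.swap_apply_right, Sym2.eq_swap]
      · rw [Equiv.swap_apply_left, Equiv.swap_apply_right, Sym2.eq_swap]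
      · exact absurd rfl huv
    have := h' (Additive.ofMul ⟨_, hs⟩) x
    rw [hv] at this
    change Equiv.swap x y x = x at this
    rw [Equiv.swap_apply_left] at this
    exact hxy this.symm
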